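/- Let f : V → ℝ^d be an odd labeling of the vertex set V of an antipodally symmetric triangulation Σ of S^d (f(-v) = -f(v)), and assume f is generic, meaning that for every face τ of Σ of dimension at most d-1, 0 ∉ conv{f(v) : v ∈ τ}. Then the number of facets σ of Σ with 0 ∈ conv{f(v) : v ∈ σ} equals 2k for some odd integer k. -/

import Mathlib

/-- The geometric realization of an abstract simplicial complex `K` on a finite vertex set
`V`, realized inside `V → ℝ` via barycentric coordinates. -/
def realization {V : Type*} [Fintype V] (K : Set (Finset V)) : Set (V → ℝ) :=
  {w | (∀ v, 0 ≤ w v) ∧ (∑ v, w v) = 1 ∧ ∃ σ ∈ K, ∀ v, w v ≠ 0 → v ∈ σ}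

/-!
The labeling extends linearly to an odd map from the realization, a `d`-sphere, to `ℝ^d`. Genericity
makes this map injective near each of its zeros, and matches the zeros with the capturing facets.
They come in antipodal pairs, and a generic equator puts one zero of each pair in an open
hemisphere. In coordinates on that hemisphere it remains to see that a map `g` on a ball which is
odd on the boundary and has finitely many zeros, each locally injective and in the interior, has an
odd number of them.

Subtracting from `g` its reflected copies around the zeros makes it odd on the boundary of a small
cube around each zero, and creates no zero outside these cubes: near a zero, `g y - g (2 • p - y)`
vanishes only for `y = 2 • p - y`. On a fine cubical grid, the signs of the coordinates of the
new map define a mod 2 cocycle that vanishes on each cell where some coordinate has constant sign,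
in particular on the fine cells outside the small cubes. Its sum over any cube on whose boundary the
map is odd is `1`, which is the combinatorial form of the Borsuk–Ulam theorem. Comparing the large
cube with the small ones, the number of zeros is `1` mod 2.
-/

section CubicalCochains

variable {n : ℕ}

/-- The set of odd integers strictly between `a` and `b`: for even `a` and `b`, the midpoints of the
intervals `[t - 1, t + 1]` into which `[a, b]` is cut. -/
noncomputable def oddsBetween (a b : ℤ) : Finset ℤ := {t ∈ Finset.Ioo a b | Odd t}

lemma mem_oddsBetween {a b t : ℤ} : t ∈ oddsBetween a b ↔ (a < t ∧ t < b) ∧ Odd t := by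
  simp [oddsBetween]

lemma sum_oddsBetween_add_sub (F : ℤ → ZMod 2) {a b : ℤ} (ha : Even a) (hb : Even b)
    (hab : a ≤ b) : ∑ t ∈ oddsBetween a b, (F (t + 1) + F (t - 1)) = F a + F b := by
  obtain ⟨k, rfl⟩ : ∃ k : ℕ, b = a + 2 * k :=
    ⟨((b - a) / 2).toNat, by have := hb.sub ha; grind⟩
  clear hb hab
  induction k with
  | zero =>
    simp [oddsBetween, CharTwo.add_self_eq_zero]
  | succ k ih =>
    have hinsert : oddsBetween a (a + 2 * (k + 1 : ℕ))
        = insert (a + 2 * k + 1) (oddsBetween a (a + 2 * k)) := by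
      ext t
      simp only [Finset.mem_insert, mem_oddsBetween]
      grind
    rw [hinsert, Finset.sum_insert (by simp [mem_oddsBetween]), ih,
      show a + 2 * (k : ℤ) + 1 + 1 = a + 2 * (k + 1 : ℕ) by push_cast; ring, add_sub_cancel_right]
    linear_combination CharTwo.add_self_eq_zero (F (a + 2 * k))

/-- The sum of a cochain over the two facets of a cell in direction `i`, zero if the cell is
degenerate in that direction. The cells of the cubical subdivision of `ℝⁿ` are encoded by their
barycentres in doubled coordinates: an odd coordinate `z i` stands for the interval
`[z i - 1, z i + 1]`, an even one for a point. -/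
def facetSum (i : Fin n) : ((Fin n → ℤ) → ZMod 2) →ₗ[ZMod 2] (Fin n → ℤ) → ZMod 2 where
  toFun A z := if Odd (z i) then
    A (Function.update z i (z i + 1)) + A (Function.update z i (z i - 1)) else 0
  map_add' A B := by ext z; simp only [Pi.add_apply]; split_ifs <;> ring
  map_smul' a A := by ext z; simp [mul_add]

lemma facetSum_apply (i : Fin n) (A : (Fin n → ℤ) → ZMod 2) (z : Fin n → ℤ) :
    facetSum i A z = if Odd (z i) then
      A (Function.update z i (z i + 1)) + A (Function.update z i (z i - 1)) else 0 := rfl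

lemma facetSum_facetSum_self (i : Fin n) (A : (Fin n → ℤ) → ZMod 2) :
    facetSum i (facetSum i A) = 0 := by
  ext z
  simp only [facetSum_apply, Function.update_self, Pi.zero_apply]
  grind

lemma facetSum_comm (i j : Fin n) (A : (Fin n → ℤ) → ZMod 2) :
    facetSum i (facetSum j A) = facetSum j (facetSum i A) := by
  obtain rfl | hij := eq_or_ne i j
  · rfl
  ext z
  simp only [facetSum_apply, Function.update_of_ne hij, Function.update_of_ne hij.symm,
    fun a b => Function.update_comm hij a b z]
  split_ifs <;> ring

/-- The cubical coboundary modulo 2, in the encoding of `facetSum`. -/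
def coboundary : ((Fin n → ℤ) → ZMod 2) →ₗ[ZMod 2] (Fin n → ℤ) → ZMod 2 := ∑ i, facetSum i

lemma coboundary_apply (A : (Fin n → ℤ) → ZMod 2) (z : Fin n → ℤ) :
    coboundary A z = ∑ i, facetSum i A z := by
  simp [coboundary]

lemma coboundary_one : coboundary (1 : (Fin n → ℤ) → ZMod 2) = 0 := by
  ext z
  simp [coboundary_apply, facetSum_apply, CharTwo.add_self_eq_zero]

lemma coboundary_coboundary (A : (Fin n → ℤ) → ZMod 2) : coboundary (coboundary A) = 0 := by
  have hsum : coboundary (coboundary A) = ∑ p : Fin n × Fin n, facetSum p.1 (facetSum p.2 A) := by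
    rw [Fintype.sum_prod_type_right]
    simp [coboundary]
  rw [hsum]
  refine Finset.sum_involution (fun p _ => p.swap) (fun p _ => ?_) (fun p _ hp hswap => hp ?_)
    (fun _ _ => Finset.mem_univ _) (fun p _ => p.swap_swap)
  · rw [Prod.fst_swap, Prod.snd_swap, facetSum_comm]
    exact CharTwo.add_self_eq_zero _
  · rw [show p.1 = p.2 from congrArg Prod.snd hswap, facetSum_facetSum_self]

lemma coboundary_cons (A : (Fin (n + 1) → ℤ) → ZMod 2) (t : ℤ) (y : Fin n → ℤ) :
    coboundary A (Fin.cons t y) =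
      (if Odd t then A (Fin.cons (t + 1) y) + A (Fin.cons (t - 1) y) else 0)
        + coboundary (fun y => A (Fin.cons t y)) y := by
  simp [coboundary_apply, facetSum_apply, Fin.sum_univ_succ, Fin.cons_update]

lemma coboundary_comp_sub (A : (Fin n → ℤ) → ZMod 2) {v : Fin n → ℤ} (hv : ∀ i, Even (v i))
    (z : Fin n → ℤ) : coboundary (fun z => A (v - z)) z = coboundary A (v - z) := by
  simp only [coboundary_apply, facetSum_apply, Pi.sub_apply]
  refine Finset.sum_congr rfl fun i _ => ?_
  have hupdate (a : ℤ) : v - Function.update z i a = Function.update (v - z) i (v i - a) := by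
    rw [Function.update_sub, Function.update_eq_self]
  rw [hupdate, hupdate, show v i - (z i + 1) = v i - z i - 1 by ring,
    show v i - (z i - 1) = v i - z i + 1 by ring, add_comm]
  simp [Int.odd_sub', hv i]

/-- `IsFace y z`: the cell `y` is a face of the cell `z`, of any codimension. -/
def IsFace (y z : Fin n → ℤ) : Prop := ∀ i, y i = z i ∨ Odd (z i) ∧ |y i - z i| = 1

lemma IsFace.refl (z : Fin n → ℤ) : IsFace z z := fun _ => Or.inl rfl

lemma IsFace.abs_sub_le_one {y z : Fin n → ℤ} (h : IsFace y z) (i : Fin n) : |y i - z i| ≤ 1 := by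
  rcases h i with h | h
  · simp [h]
  · exact h.2.le

lemma IsFace.trans {x y z : Fin n → ℤ} (hxy : IsFace x y) (hyz : IsFace y z) : IsFace x z := by
  intro i
  have h₁ := hxy i
  have h₂ := hyz i
  grind

lemma isFace_update {z : Fin n → ℤ} {i : Fin n} {a : ℤ} (hi : Odd (z i)) (ha : |a - z i| = 1) :
    IsFace (Function.update z i a) z := by
  intro j
  obtain rfl | hij := eq_or_ne j i
  · exact Or.inr ⟨hi, by simpa using ha⟩
  · exact Or.inl (Function.update_of_ne hij _ _)

lemma coboundary_congr {A B : (Fin n → ℤ) → ZMod 2} {z : Fin n → ℤ}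
    (h : ∀ y, IsFace y z → A y = B y) : coboundary A z = coboundary B z := by
  simp only [coboundary_apply, facetSum_apply]
  refine Finset.sum_congr rfl fun i _ => ?_
  split_ifs with hi
  · rw [h _ (isFace_update hi (by simp)), h _ (isFace_update hi (by simp))]
  · rfl

end CubicalCochains

section Boxes

variable {n : ℕ}

/-- The full-dimensional cells of the box with centre `c` and radius `r`. -/
noncomputable def topCells (c : Fin n → ℤ) (r : ℤ) : Finset (Fin n → ℤ) :=
  Fintype.piFinset fun i => oddsBetween (c i - r) (c i + r)

/-- The cells of the boundary of the box with centre `c` and radius `r`. -/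
def boxBoundary (c : Fin n → ℤ) (r : ℤ) : Set (Fin n → ℤ) :=
  {z | (∀ i, |z i - c i| ≤ r) ∧ ∃ i, |z i - c i| = r}

lemma mem_topCells {c : Fin n → ℤ} {r : ℤ} {z : Fin n → ℤ} :
    z ∈ topCells c r ↔ ∀ i, z i ∈ oddsBetween (c i - r) (c i + r) :=
  Fintype.mem_piFinset

lemma two_mul_sub_cons (c : Fin (n + 1) → ℤ) (t : ℤ) (y : Fin n → ℤ) :
    2 * c - (Fin.cons t y : Fin (n + 1) → ℤ) =
      (Fin.cons (2 * c 0 - t) (2 * Fin.tail c - y : Fin n → ℤ) : Fin (n + 1) → ℤ) := by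
  ext i
  refine Fin.cases ?_ (fun i => ?_) i <;> simp [Fin.tail]

lemma two_mul_sub_mem_oddsBetween {c r t : ℤ} (ht : t ∈ oddsBetween (c - r) (c + r)) :
    2 * c - t ∈ oddsBetween (c - r) (c + r) := by
  rw [mem_oddsBetween] at ht ⊢
  grind

lemma two_mul_sub_mem_topCells {c : Fin n → ℤ} {r : ℤ} {z : Fin n → ℤ} (hz : z ∈ topCells c r) :
    2 * c - z ∈ topCells c r :=
  mem_topCells.2 fun i => two_mul_sub_mem_oddsBetween (mem_topCells.1 hz i)

lemma sum_topCells_two_mul_sub (F : (Fin n → ℤ) → ZMod 2) (c : Fin n → ℤ) (r : ℤ) :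
    ∑ z ∈ topCells c r, F (2 * c - z) = ∑ z ∈ topCells c r, F z :=
  Finset.sum_nbij' (2 * c - ·) (2 * c - ·) (fun _ => two_mul_sub_mem_topCells)
    (fun _ => two_mul_sub_mem_topCells) (by simp) (by simp) (by simp)

lemma IsFace.mem_boxBoundary {c : Fin n → ℤ} {r : ℤ} (hc : ∀ i, Even (c i)) (hr : Even r)
    {y z : Fin n → ℤ} (hyz : IsFace y z) (hz : z ∈ boxBoundary c r) : y ∈ boxBoundary c r := by
  obtain ⟨hle, i, hi⟩ := hz
  refine ⟨fun j => ?_, i, ?_⟩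
  · have := hle j; have := hyz j; have := hc j
    grind
  · have := hyz i; have := hc i
    grind

lemma cons_mem_boxBoundary_of_tail {c : Fin (n + 1) → ℤ} {r t : ℤ} {y : Fin n → ℤ}
    (ht : |t - c 0| ≤ r) (hy : y ∈ boxBoundary (Fin.tail c) r) :
    Fin.cons t y ∈ boxBoundary c r := by
  obtain ⟨hle, i, hi⟩ := hy
  exact ⟨Fin.cases (by simpa) (by simpa [Fin.tail] using hle), i.succ,
    by simpa [Fin.tail] using hi⟩

lemma cons_mem_boxBoundary_of_head {c : Fin (n + 1) → ℤ} {r t : ℤ} {y : Fin n → ℤ}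
    (ht : |t - c 0| = r) (hy : ∀ i, |y i - Fin.tail c i| ≤ r) :
    Fin.cons t y ∈ boxBoundary c r :=
  ⟨Fin.cases (by simpa using ht.le) (by simpa [Fin.tail] using hy), 0, by simpa⟩

lemma abs_sub_lt_of_mem_oddsBetween {c r t : ℤ} (ht : t ∈ oddsBetween (c - r) (c + r)) :
    |t - c| < r := by
  have := (mem_oddsBetween.1 ht).1
  exact abs_sub_lt_iff.2 ⟨by lia, by lia⟩

lemma sum_topCells_succ (F : (Fin (n + 1) → ℤ) → ZMod 2) (c : Fin (n + 1) → ℤ) (r : ℤ) :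
    ∑ z ∈ topCells c r, F z = ∑ t ∈ oddsBetween (c 0 - r) (c 0 + r),
      ∑ y ∈ topCells (Fin.tail c) r, F (Fin.cons t y) := by
  rw [← Finset.sum_product']
  refine Finset.sum_nbij' (fun z => (z 0, Fin.tail z)) (fun p => Fin.cons p.1 p.2)
    (fun z hz => ?_) (fun p hp => ?_) (fun z _ => Fin.cons_self_tail z) (fun p _ => by simp)
    (fun z _ => by simp)
  · rw [mem_topCells] at hz
    exact Finset.mem_product.2 ⟨hz 0, mem_topCells.2 fun i => hz i.succ⟩
  · obtain ⟨h₀, hsucc⟩ := Finset.mem_product.1 hp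
    exact mem_topCells.2 (Fin.cases h₀ (mem_topCells.1 hsucc))

lemma sum_coboundary_slab (E : (Fin (n + 1) → ℤ) → ZMod 2) (T : Finset (Fin n → ℤ)) {a b : ℤ}
    (ha : Even a) (hb : Even b) (hab : a ≤ b)
    (hE : ∀ t ∈ oddsBetween a b, ∑ y ∈ T, coboundary (fun y => E (Fin.cons t y)) y = 0) :
    ∑ t ∈ oddsBetween a b, ∑ y ∈ T, coboundary E (Fin.cons t y) =
      ∑ y ∈ T, E (Fin.cons a y) + ∑ y ∈ T, E (Fin.cons b y) := by
  rw [← sum_oddsBetween_add_sub (fun t => ∑ y ∈ T, E (Fin.cons t y)) ha hb hab]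
  refine Finset.sum_congr rfl fun t ht => ?_
  simp only [coboundary_cons, if_pos (mem_oddsBetween.1 ht).2, Finset.sum_add_distrib, hE t ht,
    add_zero]

lemma sum_coboundary_eq_zero {c : Fin n → ℤ} {r : ℤ} (hc : ∀ i, Even (c i)) (hr : Even r)
    (hr₀ : 0 ≤ r) {E : (Fin n → ℤ) → ZMod 2} (hE : ∀ z ∈ boxBoundary c r, E z = 0) :
    ∑ z ∈ topCells c r, coboundary E z = 0 := by
  induction n with
  | zero => simp [coboundary_apply]
  | succ n ih =>
    rw [sum_topCells_succ, sum_coboundary_slab E _ ((hc 0).sub hr) ((hc 0).add hr) (by lia)]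
    · have hend (t : ℤ) (ht : |t - c 0| = r) :
          ∑ y ∈ topCells (Fin.tail c) r, E (Fin.cons t y) = 0 :=
        Finset.sum_eq_zero fun y hy => hE _ (cons_mem_boxBoundary_of_head ht fun i =>
          (abs_sub_lt_of_mem_oddsBetween (mem_topCells.1 hy i)).le)
      rw [hend _ (by simp [hr₀]), hend _ (by simp [hr₀]), add_zero]
    · exact fun t ht => ih (fun i => hc i.succ) fun y hy => hE _
        (cons_mem_boxBoundary_of_tail (abs_sub_lt_of_mem_oddsBetween ht).le hy)

lemma sum_coboundary_upper_half {c : Fin (n + 1) → ℤ} {r : ℤ} (hc : ∀ i, Even (c i))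
    (hr : Even r) (hr₀ : 0 ≤ r) {E : (Fin (n + 1) → ℤ) → ZMod 2}
    (hE : ∀ z ∈ boxBoundary c r, E z = 0) :
    ∑ t ∈ oddsBetween (c 0) (c 0 + r), ∑ y ∈ topCells (Fin.tail c) r, coboundary E (Fin.cons t y) =
      ∑ y ∈ topCells (Fin.tail c) r, E (Fin.cons (c 0) y) := by
  rw [sum_coboundary_slab E _ (hc 0) ((hc 0).add hr) (by lia)]
  · have htop : ∑ y ∈ topCells (Fin.tail c) r, E (Fin.cons (c 0 + r) y) = 0 :=
      Finset.sum_eq_zero fun y hy => hE _ (cons_mem_boxBoundary_of_head (by simp [hr₀]) fun i =>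
        (abs_sub_lt_of_mem_oddsBetween (mem_topCells.1 hy i)).le)
    rw [htop, add_zero]
  · refine fun t ht => sum_coboundary_eq_zero (fun i => hc i.succ) hr hr₀ fun y hy => hE _
      (cons_mem_boxBoundary_of_tail ?_ hy)
    have := (mem_oddsBetween.1 ht).1
    exact abs_sub_le_iff.2 ⟨by lia, by lia⟩

lemma sum_topCells_eq_sum_upper_half {c : Fin (n + 1) → ℤ} {r : ℤ} (hc : Even (c 0))
    (F : (Fin (n + 1) → ℤ) → ZMod 2) :
    ∑ z ∈ topCells c r, F z = ∑ t ∈ oddsBetween (c 0) (c 0 + r), ∑ y ∈ topCells (Fin.tail c) r,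
      (F (Fin.cons t y) + F (2 * c - Fin.cons t y)) := by
  set S : ℤ → ZMod 2 := fun t => ∑ y ∈ topCells (Fin.tail c) r, F (Fin.cons t y)
  have hreflect (t : ℤ) :
      ∑ y ∈ topCells (Fin.tail c) r, F (2 * c - Fin.cons t y) = S (2 * c 0 - t) := by
    simp only [two_mul_sub_cons]
    exact sum_topCells_two_mul_sub (fun y => F (Fin.cons (2 * c 0 - t) y)) _ _
  have hlower : ∑ t ∈ oddsBetween (c 0) (c 0 + r), S (2 * c 0 - t)
      = ∑ t ∈ oddsBetween (c 0 - r) (c 0), S t := by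
    refine Finset.sum_nbij' (2 * c 0 - ·) (2 * c 0 - ·) ?_ ?_ (by simp) (by simp) (by simp) <;>
    · intro t
      simp only [mem_oddsBetween]
      grind
  have hsplit : oddsBetween (c 0 - r) (c 0 + r)
      = oddsBetween (c 0) (c 0 + r) ∪ oddsBetween (c 0 - r) (c 0) := by
    ext t
    simp only [Finset.mem_union, mem_oddsBetween]
    grind
  have hdisjoint : Disjoint (oddsBetween (c 0) (c 0 + r)) (oddsBetween (c 0 - r) (c 0)) := by
    rw [Finset.disjoint_left]
    simp only [mem_oddsBetween]
    grind
  simp only [sum_topCells_succ, hsplit, Finset.sum_union hdisjoint, Finset.sum_add_distrib,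
    hreflect, hlower]
  rfl

end Boxes

section SignCocycle

variable {n : ℕ}

/-- The cochain `δ (s₁ * δ (s₂ * ⋯ δ sₖ))` of the sign functions `s₁, …, sₖ`, where `δ` is
`coboundary`: a combinatorial version of the cup product of the cochains `δ sᵢ`. Cochains are
functions on the cells of all dimensions; this one is designed for cells of dimension `k`. -/
def signCocycle : List ((Fin n → ℤ) → ZMod 2) → (Fin n → ℤ) → ZMod 2
  | [] => 1
  | s :: l => coboundary (s * signCocycle l)

lemma coboundary_signCocycle (l : List ((Fin n → ℤ) → ZMod 2)) :
    coboundary (signCocycle l) = 0 := by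
  cases l with
  | nil => exact coboundary_one
  | cons s l => exact coboundary_coboundary _

lemma signCocycle_eq_zero {l : List ((Fin n → ℤ) → ZMod 2)} {s : (Fin n → ℤ) → ZMod 2}
    (hs : s ∈ l) {z : Fin n → ℤ} (hconst : ∀ y, IsFace y z → s y = s z) :
    signCocycle l z = 0 := by
  induction l generalizing z with
  | nil => simp at hs
  | cons s' l ih =>
    obtain rfl | hs := List.mem_cons.1 hs
    · have hsmul : ∀ y, IsFace y z → (s * signCocycle l) y = (s z • signCocycle l) y :=
        fun y hy => by simp [hconst y hy]
      rw [signCocycle, coboundary_congr hsmul, map_smul, coboundary_signCocycle, smul_zero,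
        Pi.zero_apply]
    · have hzero : ∀ y, IsFace y z → (s' * signCocycle l) y = (0 : (Fin n → ℤ) → ZMod 2) y :=
        fun y hy => by
          rw [Pi.mul_apply, ih hs fun x hx => by rw [hconst x (hx.trans hy), hconst y hy], mul_zero,
            Pi.zero_apply]
      rw [signCocycle, coboundary_congr hzero, map_zero, Pi.zero_apply]

lemma signCocycle_cons_even {c₀ : ℤ} (hc₀ : Even c₀) (l : List ((Fin (n + 1) → ℤ) → ZMod 2))
    (y : Fin n → ℤ) : signCocycle l (Fin.cons c₀ y) =
      signCocycle (l.map fun s y => s (Fin.cons c₀ y)) y := by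
  induction l generalizing y with
  | nil => rfl
  | cons s l ih =>
    rw [signCocycle, coboundary_cons, if_neg (Int.not_odd_iff_even.2 hc₀), zero_add, List.map_cons,
      signCocycle]
    exact congrArg (coboundary · y) (funext fun y => congrArg (s (Fin.cons c₀ y) * ·) (ih y))

/-- The function `s` changes sign under the reflection of the boundary of the box with centre `c`
and radius `r`; signs are written additively, in `ZMod 2`. -/
def OddOnBoundary (c : Fin n → ℤ) (r : ℤ) (s : (Fin n → ℤ) → ZMod 2) : Prop :=
  ∀ z ∈ boxBoundary c r, s (2 * c - z) = s z + 1

lemma OddOnBoundary.slice {c : Fin (n + 1) → ℤ} {r : ℤ} (hr₀ : 0 ≤ r)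
    {s : (Fin (n + 1) → ℤ) → ZMod 2} (hs : OddOnBoundary c r s) :
    OddOnBoundary (Fin.tail c) r fun y => s (Fin.cons (c 0) y) := by
  intro y hy
  have h := hs _ (cons_mem_boxBoundary_of_tail (t := c 0) (by simpa using hr₀) hy)
  rwa [two_mul_sub_cons, two_mul (c 0), add_sub_cancel_right] at h

variable {c : Fin n → ℤ} {r : ℤ}

lemma signCocycle_two_mul_sub (hc : ∀ i, Even (c i)) (hr : Even r)
    {l : List ((Fin n → ℤ) → ZMod 2)} (hl : ∀ s ∈ l, OddOnBoundary c r s) :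
    ∀ z ∈ boxBoundary c r, signCocycle l (2 * c - z) = signCocycle l z := by
  induction l with
  | nil => exact fun _ _ => rfl
  | cons s l ih =>
    intro z hz
    obtain ⟨hs, hl⟩ := List.forall_mem_cons.1 hl
    have hfaces : ∀ y, IsFace y z → (s * signCocycle l) (2 * c - y)
        = (s * signCocycle l + signCocycle l) y := fun y hy => by
      have hy := hy.mem_boxBoundary hc hr hz
      simp only [Pi.mul_apply, Pi.add_apply, hs y hy, ih hl y hy]
      ring
    rw [signCocycle, ← coboundary_comp_sub _ (fun i => by simp), coboundary_congr hfaces, map_add,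
      coboundary_signCocycle, add_zero]

/-- Reflecting one half of the box onto the other reduces the sum to the coboundary, over the upper
half, of a cochain that vanishes on the outer boundary; the remaining face of the upper half is the
equatorial slice, where the same sum appears one dimension lower. -/
theorem sum_signCocycle_eq_one (hc : ∀ i, Even (c i)) (hr : Even r) (hr₀ : 0 ≤ r)
    {l : List ((Fin n → ℤ) → ZMod 2)} (hlen : l.length = n) (hl : ∀ s ∈ l, OddOnBoundary c r s) :
    ∑ z ∈ topCells c r, signCocycle l z = 1 := by
  induction n with
  | zero =>
    obtain rfl := List.eq_nil_of_length_eq_zero hlen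
    simp [topCells, signCocycle]
  | succ n ih =>
    obtain ⟨s, l, rfl⟩ := List.exists_cons_of_length_eq_add_one hlen
    obtain ⟨hs, hl⟩ := List.forall_mem_cons.1 hl
    set W := signCocycle l
    set B := s * W
    let E := B + (fun z => B (2 * c - z)) + W
    have hE : ∀ z ∈ boxBoundary c r, E z = 0 := fun z hz => by
      simp only [E, B, W, Pi.add_apply, Pi.mul_apply, hs z hz,
        signCocycle_two_mul_sub hc hr hl z hz]
      grind
    have hδE (z : Fin (n + 1) → ℤ) :
        coboundary B z + coboundary B (2 * c - z) = coboundary E z := by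
      simp [E, W, coboundary_signCocycle, coboundary_comp_sub B (v := 2 * c) (fun i => by simp)]
    have hequator : ∑ y ∈ topCells (Fin.tail c) r,
        (B (Fin.cons (c 0) y) + B (2 * c - Fin.cons (c 0) y)) = 0 := by
      simp only [two_mul_sub_cons, show 2 * c 0 - c 0 = c 0 by ring, Finset.sum_add_distrib,
        sum_topCells_two_mul_sub (fun y => B (Fin.cons (c 0) y)), CharTwo.add_self_eq_zero]
    calc ∑ z ∈ topCells c r, signCocycle (s :: l) z
        = ∑ t ∈ oddsBetween (c 0) (c 0 + r), ∑ y ∈ topCells (Fin.tail c) r,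
            coboundary E (Fin.cons t y) := by
          simp only [sum_topCells_eq_sum_upper_half (hc 0), signCocycle, ← hδE, W, B]
      _ = ∑ y ∈ topCells (Fin.tail c) r, E (Fin.cons (c 0) y) :=
          sum_coboundary_upper_half hc hr hr₀ hE
      _ = ∑ y ∈ topCells (Fin.tail c) r, W (Fin.cons (c 0) y) := by
          simp only [E, Pi.add_apply]
          rw [Finset.sum_add_distrib, hequator, zero_add]
      _ = 1 := by
          simp only [W, signCocycle_cons_even (hc 0)]
          exact ih (fun i => hc i.succ) (by simpa using hlen) (List.forall_mem_map.2
            fun s hs => (hl s hs).slice hr₀)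

theorem odd_card_of_signCocycle_eq_zero {ι : Type*} {P : Finset ι} {p : ι → Fin n → ℤ} {ρ : ℤ}
    (hc : ∀ i, Even (c i)) (hr : Even r) (hr₀ : 0 ≤ r)
    (hp : ∀ x ∈ P, ∀ i, Even (p x i)) (hρ : Even ρ) (hρ₀ : 0 ≤ ρ)
    {l : List ((Fin n → ℤ) → ZMod 2)} (hlen : l.length = n)
    (hl : ∀ s ∈ l, OddOnBoundary c r s) (hl' : ∀ x ∈ P, ∀ s ∈ l, OddOnBoundary (p x) ρ s)
    (hsub : ∀ x ∈ P, topCells (p x) ρ ⊆ topCells c r)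
    (hdisj : (P : Set ι).PairwiseDisjoint fun x => topCells (p x) ρ)
    (hzero : ∀ z ∈ topCells c r, (∀ x ∈ P, z ∉ topCells (p x) ρ) → signCocycle l z = 0) :
    Odd P.card := by
  classical
  rw [← ZMod.natCast_eq_one_iff_odd]
  calc (P.card : ZMod 2) = ∑ x ∈ P, ∑ z ∈ topCells (p x) ρ, signCocycle l z := by
        rw [Finset.sum_congr rfl fun x hx =>
          sum_signCocycle_eq_one (hp x hx) hρ hρ₀ hlen (hl' x hx), Finset.sum_const, nsmul_one]
    _ = ∑ z ∈ P.biUnion fun x => topCells (p x) ρ, signCocycle l z :=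
        (Finset.sum_biUnion hdisj).symm
    _ = ∑ z ∈ topCells c r, signCocycle l z :=
        Finset.sum_subset (Finset.biUnion_subset.2 hsub) fun z hz hnot => hzero z hz (by
          simpa using hnot)
    _ = 1 := sum_signCocycle_eq_one hc hr hr₀ hlen hl

end SignCocycle

section PerforatedCubes

variable {n : ℕ}

/-- The sign of the coordinate `v i`, written in `ZMod 2`. Ties at `v i = 0` are broken by the
lexicographic sign of `v`, so that the sign is an odd function of every `v ≠ 0`. -/
noncomputable def lexSign (v : Fin n → ℝ) (i : Fin n) : ZMod 2 :=
  if 0 < toLex (v i, toLex v) then 1 else 0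

lemma lexSign_neg {v : Fin n → ℝ} (hv : v ≠ 0) (i : Fin n) : lexSign (-v) i = lexSign v i + 1 := by
  have hne : toLex (v i, toLex v) ≠ 0 := fun h => hv (congrArg Prod.snd h)
  have hneg : toLex ((-v) i, toLex (-v)) = -toLex (v i, toLex v) := rfl
  simp only [lexSign, hneg, neg_pos]
  rcases hne.lt_or_gt with h | h
  · simp [h, h.not_gt]
  · simp [h, h.not_gt, CharTwo.add_self_eq_zero]

lemma lexSign_eq_of_mul_pos {v w : Fin n → ℝ} {i : Fin n} (h : 0 < v i * w i) :
    lexSign v i = lexSign w i := by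
  have hiff : 0 < v i ↔ 0 < w i := by
    rcases mul_pos_iff.1 h with h | h
    · simp [h]
    · simp [h.1.not_gt, h.2.not_gt]
  have hlex {u : Fin n → ℝ} (hu : u i ≠ 0) : 0 < toLex (u i, toLex u) ↔ 0 < u i := by
    simp [Prod.Lex.lt_iff, hu.symm]
  have hne := mul_ne_zero_iff.1 h.ne'
  simp only [lexSign, hlex hne.1, hlex hne.2, hiff]

lemma exists_forall_dist_lt_mul_pos {X : Type*} [PseudoMetricSpace X] {E : Set X}
    (hE : IsCompact E) {G : X → Fin n → ℝ} (hG : ContinuousOn G E) (hne : ∀ x ∈ E, G x ≠ 0) :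
    ∃ δ > 0, ∀ x ∈ E, ∃ i, ∀ y ∈ E, dist y x < δ → 0 < G y i * G x i := by
  obtain ⟨μ, hμ, hμG⟩ := hE.exists_forall_le' hG.norm fun x hx => norm_pos_iff.2 (hne x hx)
  obtain ⟨δ, hδ, hunif⟩ := Metric.uniformContinuousOn_iff.1
    (hE.uniformContinuousOn_of_continuous hG) μ hμ
  refine ⟨δ, hδ, fun x hx => ?_⟩
  obtain ⟨i, hi⟩ : ∃ i, μ ≤ |G x i| := by
    by_contra! h
    exact (hμG x hx).not_gt ((pi_norm_lt_iff hμ).2 h)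
  refine ⟨i, fun y hy hyx => ?_⟩
  have hclose : |G y i - G x i| < μ := (dist_le_pi_dist (G y) (G x) i).trans_lt
    (hunif y hy x hx hyx)
  rcases le_abs.1 hi with h | h
  · exact mul_pos (by linarith [abs_lt.1 hclose]) (hμ.trans_le h)
  · exact mul_pos_of_neg_of_neg (by linarith [abs_lt.1 hclose]) (by linarith)

/-- The cube of radius `m` centred at the origin, in the sup norm, with the open unit cubes centred
at the points `p x`, `x ∈ P`, removed. -/
def perforatedCube {ι : Type*} (m : ℝ) (P : Finset ι) (p : ι → Fin n → ℝ) : Set (Fin n → ℝ) :=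
  {y | ‖y‖ ≤ m ∧ ∀ x ∈ P, 1 ≤ ‖y - p x‖}

lemma mem_perforatedCube_of_norm_eq {ι : Type*} {m : ℝ} {P : Finset ι} {p : ι → Fin n → ℝ}
    (hin : ∀ x ∈ P, ‖p x‖ + 1 ≤ m) {y : Fin n → ℝ} (hy : ‖y‖ = m) : y ∈ perforatedCube m P p :=
  ⟨hy.le, fun x hx => by linarith [hin x hx, norm_sub_norm_le y (p x)]⟩

lemma mem_perforatedCube_of_norm_sub_eq {ι : Type*} {m : ℝ} {P : Finset ι} {p : ι → Fin n → ℝ}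
    (hin : ∀ x ∈ P, ‖p x‖ + 1 ≤ m) (hsep : (P : Set ι).Pairwise fun x y => 2 ≤ ‖p x - p y‖)
    {x : ι} (hx : x ∈ P) {y : Fin n → ℝ} (hy : ‖y - p x‖ = 1) : y ∈ perforatedCube m P p := by
  refine ⟨by linarith [hin x hx, norm_sub_norm_le y (p x)], fun x' hx' => ?_⟩
  rcases eq_or_ne x x' with rfl | hne
  · exact hy.ge
  · linarith [hsep hx hx' hne, norm_sub_le_norm_sub_add_norm_sub (p x) y (p x'),
      norm_sub_rev y (p x)]

lemma isCompact_perforatedCube {ι : Type*} (m : ℝ) (P : Finset ι) (p : ι → Fin n → ℝ) :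
    IsCompact (perforatedCube m P p) := by
  have hclosed : IsClosed {y : Fin n → ℝ | ∀ x ∈ P, 1 ≤ ‖y - p x‖} := by
    simp only [Set.ofPred_forall]
    exact isClosed_biInter fun x _ => isClosed_le continuous_const (by fun_prop)
  have heq : perforatedCube m P p = Metric.closedBall 0 m ∩ {y | ∀ x ∈ P, 1 ≤ ‖y - p x‖} :=
    Set.ext fun y => and_congr_left' mem_closedBall_zero_iff.symm
  exact heq ▸ (isCompact_closedBall 0 m).inter_right hclosed

/-- The point with integer coordinates `z` in the grid of mesh `1 / (2 * N)`. -/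
noncomputable def gridPoint (N : ℕ) (z : Fin n → ℤ) : Fin n → ℝ := fun i => z i / (2 * N)

lemma gridPoint_two_mul_sub (N : ℕ) (c z : Fin n → ℤ) :
    gridPoint N (2 * c - z) = 2 • gridPoint N c - gridPoint N z := by
  ext i
  simp [gridPoint, sub_div, mul_div_assoc]

@[simp]
lemma gridPoint_zero (N : ℕ) : gridPoint N (0 : Fin n → ℤ) = 0 := by
  ext
  simp [gridPoint]

lemma gridPoint_smul {N : ℕ} (hN : 0 < N) (p : Fin n → ℤ) :
    gridPoint N ((2 * N : ℤ) • p) = fun i => (p i : ℝ) := by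
  ext i
  simp [gridPoint]
  field_simp

lemma abs_gridPoint_sub (N : ℕ) (y z : Fin n → ℤ) (i : Fin n) :
    |gridPoint N y i - gridPoint N z i| = (|y i - z i| : ℤ) / (2 * N) := by
  rw [gridPoint, gridPoint, ← sub_div, abs_div, abs_of_nonneg (by positivity : (0 : ℝ) ≤ 2 * N)]
  push_cast
  rfl

lemma norm_gridPoint_sub_le {N k : ℕ} (hN : 0 < N) {y z : Fin n → ℤ}
    (h : ∀ i, |y i - z i| ≤ 2 * N * k) : ‖gridPoint N y - gridPoint N z‖ ≤ k := by
  refine (pi_norm_le_iff_of_nonneg k.cast_nonneg).2 fun i => ?_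
  rw [Pi.sub_apply, Real.norm_eq_abs, abs_gridPoint_sub, div_le_iff₀' (by positivity)]
  exact_mod_cast h i

lemma le_norm_gridPoint_sub {N k : ℕ} (hN : 0 < N) {y z : Fin n → ℤ} {i : Fin n}
    (h : 2 * N * k ≤ |y i - z i|) : k ≤ ‖gridPoint N y - gridPoint N z‖ := by
  refine le_trans ?_ (norm_le_pi_norm _ i)
  rw [Pi.sub_apply, Real.norm_eq_abs, abs_gridPoint_sub, le_div_iff₀' (by positivity)]
  exact_mod_cast h

lemma norm_gridPoint_sub_of_mem_boxBoundary {N k : ℕ} (hN : 0 < N) {c z : Fin n → ℤ}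
    (hz : z ∈ boxBoundary c (2 * N * k)) : ‖gridPoint N z - gridPoint N c‖ = k :=
  (norm_gridPoint_sub_le hN hz.1).antisymm
    (hz.2.elim fun _ hi => le_norm_gridPoint_sub hN hi.ge)

lemma norm_gridPoint_sub_lt_of_mem_topCells {N k : ℕ} (hN : 0 < N) (hk : 0 < k)
    {c z : Fin n → ℤ} (hz : z ∈ topCells c (2 * N * k)) :
    ‖gridPoint N z - gridPoint N c‖ < k := by
  refine (pi_norm_lt_iff (by positivity)).2 fun i => ?_
  rw [Pi.sub_apply, Real.norm_eq_abs, abs_gridPoint_sub, div_lt_iff₀' (by positivity)]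
  exact_mod_cast abs_sub_lt_of_mem_oddsBetween (mem_topCells.1 hz i)

lemma dist_gridPoint_le (N : ℕ) {y z : Fin n → ℤ} (h : ∀ i, |y i - z i| ≤ 1) :
    dist (gridPoint N y) (gridPoint N z) ≤ 1 / (2 * N) := by
  refine (dist_pi_le_iff (by positivity)).2 fun i => ?_
  rw [Real.dist_eq, abs_gridPoint_sub]
  gcongr
  exact_mod_cast h i

lemma oddOnBoundary_lexSign {N k : ℕ} (hN : 0 < N) {G : (Fin n → ℝ) → Fin n → ℝ} {c : Fin n → ℤ}
    (hodd : ∀ y, ‖y - gridPoint N c‖ = k → G (2 • gridPoint N c - y) = -G y)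
    (hne : ∀ y, ‖y - gridPoint N c‖ = k → G y ≠ 0) (i : Fin n) :
    OddOnBoundary c (2 * N * k) fun z => lexSign (G (gridPoint N z)) i := fun z hz => by
  have hnorm := norm_gridPoint_sub_of_mem_boxBoundary hN hz
  simp only [gridPoint_two_mul_sub, hodd _ hnorm, lexSign_neg (hne _ hnorm)]

lemma gridPoint_mem_perforatedCube {ι : Type*} {P : Finset ι} {c : ι → Fin n → ℤ} {N m : ℕ}
    (hN : 0 < N) (hc : ∀ x ∈ P, ∀ i, Even (c x i)) {y z : Fin n → ℤ} (hyz : IsFace y z)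
    (hz : z ∈ topCells 0 (2 * N * m)) (hP : ∀ x ∈ P, z ∉ topCells (c x) (2 * N)) :
    gridPoint N y ∈ perforatedCube m P fun x => gridPoint N (c x) := by
  have hface i := abs_le.1 (hyz.abs_sub_le_one i)
  have hzi i := mem_oddsBetween.1 (mem_topCells.1 hz i)
  constructor
  · rw [← sub_zero (gridPoint N y), ← gridPoint_zero N]
    refine norm_gridPoint_sub_le hN fun i => ?_
    have := (hzi i).1
    simp only [Pi.zero_apply, zero_sub, zero_add, sub_zero, abs_le] at this ⊢
    have := hface i
    omega
  · intro x hx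
    obtain ⟨i, hi⟩ : ∃ i, z i ∉ oddsBetween (c x i - 2 * N) (c x i + 2 * N) := by
      simpa only [mem_topCells, not_forall] using hP x hx
    have hlarge : 2 * (N : ℤ) ≤ |y i - c x i| := by
      have hodd := (hzi i).2
      have heven := hc x hx i
      have hi' : ¬ (c x i - 2 * N < z i ∧ z i < c x i + 2 * N) := fun h =>
        hi (mem_oddsBetween.2 ⟨h, hodd⟩)
      have := hface i
      rw [le_abs]
      grind
    simpa using le_norm_gridPoint_sub (k := 1) hN (by simpa using hlarge)

lemma pairwiseDisjoint_topCells {ι : Type*} {P : Set ι} {c : ι → Fin n → ℤ} {N : ℕ} (hN : 0 < N)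
    (hsep : P.Pairwise fun x y => 2 ≤ ‖gridPoint N (c x) - gridPoint N (c y)‖) :
    P.PairwiseDisjoint fun x => topCells (c x) (2 * N) := by
  refine fun x hx y hy hxy => Finset.disjoint_left.2 fun z hzx hzy => ?_
  have hlt {x : ι} (hz : z ∈ topCells (c x) (2 * N)) :
      ‖gridPoint N z - gridPoint N (c x)‖ < 1 := by
    simpa using norm_gridPoint_sub_lt_of_mem_topCells (k := 1) hN one_pos (by simpa using hz)
  linarith [hsep hx hy hxy, norm_sub_le_norm_sub_add_norm_sub (gridPoint N (c x)) (gridPoint N z)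
    (gridPoint N (c y)), norm_sub_rev (gridPoint N (c x)) (gridPoint N z), hlt hzx, hlt hzy]

lemma topCells_subset_topCells {c c' : Fin n → ℤ} {r r' : ℤ} (h : ∀ i, |c' i - c i| + r' ≤ r) :
    topCells c' r' ⊆ topCells c r := fun z hz => mem_topCells.2 fun i => by
  have hzi := mem_oddsBetween.1 (mem_topCells.1 hz i)
  have hi := h i
  exact mem_oddsBetween.2 ⟨by grind, hzi.2⟩

lemma topCells_smul_subset {N m : ℕ} {p : Fin n → ℤ}
    (hp : ‖fun i => (p i : ℝ)‖ + 1 ≤ m) :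
    topCells ((2 * N : ℤ) • p) (2 * N) ⊆ topCells 0 (2 * N * m) := by
  refine topCells_subset_topCells fun i => ?_
  have hpi : |p i| + 1 ≤ m := by
    have := norm_le_pi_norm (fun i => (p i : ℝ)) i
    rw [Real.norm_eq_abs] at this
    exact_mod_cast (add_le_add_left this 1).trans hp
  simpa [abs_mul, mul_add] using mul_le_mul_of_nonneg_left hpi (by positivity : (0 : ℤ) ≤ 2 * N)

theorem odd_card_of_ne_zero_on_perforatedCube {ι : Type*} {P : Finset ι} {p : ι → Fin n → ℤ}
    {q : ι → Fin n → ℝ} (hpq : ∀ x, (fun i => (p x i : ℝ)) = q x) {m : ℕ}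
    (hin : ∀ x ∈ P, ‖q x‖ + 1 ≤ m) (hsep : (P : Set ι).Pairwise fun x y => 2 ≤ ‖q x - q y‖)
    {G : (Fin n → ℝ) → Fin n → ℝ} (hG : ContinuousOn G (perforatedCube m P q))
    (hne : ∀ y ∈ perforatedCube m P q, G y ≠ 0) (hodd : ∀ y, ‖y‖ = m → G (-y) = -G y)
    (hodd' : ∀ x ∈ P, ∀ y, ‖y - q x‖ = 1 → G (2 • q x - y) = -G y) :
    Odd P.card := by
  obtain ⟨δ, hδ, hsign⟩ := exists_forall_dist_lt_mul_pos (isCompact_perforatedCube m P q) hG hne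
  obtain ⟨N, hNδ⟩ := exists_nat_gt (1 / δ)
  have hN : 0 < N := Nat.cast_pos.1 ((one_div_pos.2 hδ).trans hNδ)
  have hmesh : 1 / (2 * N : ℝ) < δ := by
    rw [one_div_lt (by positivity) hδ]
    linarith [hNδ, (Nat.cast_pos (α := ℝ)).2 hN]
  let c x : Fin n → ℤ := (2 * N : ℤ) • p x
  have hc x : gridPoint N (c x) = q x := (gridPoint_smul hN (p x)).trans (hpq x)
  have heven x i : Even (c x i) := by simp [c, mul_assoc]
  refine odd_card_of_signCocycle_eq_zero (c := 0) (r := 2 * N * m) (p := c) (ρ := 2 * N)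
    (l := List.ofFn fun i z => lexSign (G (gridPoint N z)) i) (by simp) (by simp [mul_assoc])
    (by positivity) (fun x _ => heven x) (by simp) (by positivity) (by simp) ?outer ?hole
    (fun x hx => topCells_smul_subset (by simpa only [hpq] using hin x hx))
    (pairwiseDisjoint_topCells hN (by simpa only [hc] using hsep)) ?vanish
  case outer =>
    refine List.forall_mem_ofFn_iff.2 fun i => oddOnBoundary_lexSign hN ?_ ?_ i
    · simpa using hodd
    · simpa using fun y hy => hne y (mem_perforatedCube_of_norm_eq hin hy)
  case hole =>
    refine fun x hx => List.forall_mem_ofFn_iff.2 fun i => ?_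
    rw [← mul_one (2 * N : ℤ)]
    refine oddOnBoundary_lexSign (k := 1) hN ?_ ?_ i
    · simpa only [hc, Nat.cast_one] using hodd' x hx
    · simpa only [hc, Nat.cast_one] using
        fun y hy => hne y (mem_perforatedCube_of_norm_sub_eq hin hsep hx hy)
  case vanish =>
    intro z hz hnot
    have hmem {y : Fin n → ℤ} (hy : IsFace y z) : gridPoint N y ∈ perforatedCube m P q := by
      simpa only [hc] using gridPoint_mem_perforatedCube hN (fun x _ => heven x) hy hz hnot
    obtain ⟨i, hi⟩ := hsign _ (hmem (IsFace.refl z))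
    exact signCocycle_eq_zero (List.mem_ofFn.2 ⟨i, rfl⟩) fun y hy => lexSign_eq_of_mul_pos <|
      hi _ (hmem hy) ((dist_gridPoint_le N fun j => hy.abs_sub_le_one j).trans_lt hmesh)

end PerforatedCubes

section Surgery

open scoped Topology

variable {n : ℕ}

/-- The point reflection in `p` on the unit ball around `p`, deformed radially to the constant map
with value `x` outside the ball of radius `2`. -/
noncomputable def cutoffReflection {E : Type*} [NormedAddCommGroup E] [NormedSpace ℝ E]
    (x p y : E) : E :=
  x + max 0 (min 1 (2 - ‖y - p‖)) • (2 • p - y - x)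

section NormedSpace

variable {E : Type*} [NormedAddCommGroup E] [NormedSpace ℝ E] {x p y : E}

lemma continuous_cutoffReflection (x p : E) : Continuous (cutoffReflection x p) := by
  unfold cutoffReflection
  fun_prop

lemma cutoffReflection_of_norm_sub_le_one (h : ‖y - p‖ ≤ 1) :
    cutoffReflection x p y = 2 • p - y := by
  rw [cutoffReflection, min_eq_left (by linarith), max_eq_right zero_le_one, one_smul,
    add_sub_cancel]

lemma cutoffReflection_of_two_le_norm_sub (h : 2 ≤ ‖y - p‖) : cutoffReflection x p y = x := by
  rw [cutoffReflection, max_eq_left ((min_le_right _ _).trans (by linarith)), zero_smul, add_zero]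

lemma norm_cutoffReflection_sub_le (hx : ‖x - p‖ ≤ 1 / 2) (hy : ‖y - p‖ ≤ 2) :
    ‖cutoffReflection x p y - x‖ ≤ 3 := by
  set t := max 0 (min 1 (2 - ‖y - p‖))
  have ht₀ : 0 ≤ t := le_max_left _ _
  have ht₁ : t ≤ 1 := max_le zero_le_one (min_le_left _ _)
  have hsplit : 2 • p - y - x = -((y - p) + (x - p)) := by module
  calc ‖cutoffReflection x p y - x‖ = t * ‖(y - p) + (x - p)‖ := by
        rw [cutoffReflection, add_sub_cancel_left, hsplit, norm_smul, norm_neg,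
          Real.norm_of_nonneg ht₀]
    _ ≤ 1 * (2 + 1 / 2) := by
        gcongr
        exact (norm_add_le _ _).trans (add_le_add hy hx)
    _ ≤ 3 := by norm_num

lemma cutoffReflection_ne_self (hx : ‖x - p‖ ≤ 1 / 2) (hy : 1 ≤ ‖y - p‖) :
    cutoffReflection x p y ≠ y := fun h => by
  set t := max 0 (min 1 (2 - ‖y - p‖))
  have ht₀ : 0 ≤ t := le_max_left _ _
  have ht₁ : t ≤ 1 := max_le zero_le_one (min_le_left _ _)
  have hfix : (1 + t) • (y - p) = (1 - t) • (x - p) := by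
    have h' : x + t • (2 • p - y - x) = y := h
    rw [← sub_eq_zero, ← sub_eq_zero.2 h'.symm]
    module
  have hnorm : (1 + t) * ‖y - p‖ = (1 - t) * ‖x - p‖ := by
    have := congrArg norm hfix
    rwa [norm_smul, norm_smul, Real.norm_of_nonneg (by linarith),
      Real.norm_of_nonneg (by linarith)] at this
  nlinarith

end NormedSpace

/-- The difference of `g` and its reflected copies around the points `x i`: it agrees with `g` away
from the points `p i` and is odd about `p i` on the unit sphere around `p i`. -/
noncomputable def localOddPart {E F ι : Type*} [NormedAddCommGroup E] [NormedSpace ℝ E]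
    [AddCommGroup F] (g : E → F) (P : Finset ι) (x p : ι → E) (y : E) : F :=
  g y - ∑ i ∈ P, g (cutoffReflection (x i) (p i) y)

section LocalOddPart

variable {E F ι : Type*} [NormedAddCommGroup E] [NormedSpace ℝ E] [AddCommGroup F] {g : E → F}
  {P : Finset ι} {x p : ι → E} {y : E}

lemma localOddPart_eq_self (hg : ∀ i ∈ P, g (x i) = 0) (hy : ∀ i ∈ P, 2 ≤ ‖y - p i‖) :
    localOddPart g P x p y = g y := by
  rw [localOddPart, Finset.sum_eq_zero fun i hi => by
    rw [cutoffReflection_of_two_le_norm_sub (hy i hi), hg i hi], sub_zero]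

lemma localOddPart_eq_sub (hg : ∀ i ∈ P, g (x i) = 0)
    (hsep : (P : Set ι).Pairwise fun i j => 4 ≤ ‖p i - p j‖) {i : ι} (hi : i ∈ P)
    (hy : ‖y - p i‖ ≤ 2) :
    localOddPart g P x p y = g y - g (cutoffReflection (x i) (p i) y) := by
  rw [localOddPart, Finset.sum_eq_single_of_mem i hi fun j hj hji => ?_]
  rw [cutoffReflection_of_two_le_norm_sub, hg j hj]
  linarith [hsep hi hj hji.symm, norm_sub_le_norm_sub_add_norm_sub (p i) y (p j),
    norm_sub_rev y (p i)]

lemma localOddPart_two_smul_sub (hg : ∀ i ∈ P, g (x i) = 0)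
    (hsep : (P : Set ι).Pairwise fun i j => 4 ≤ ‖p i - p j‖) {i : ι} (hi : i ∈ P)
    (hy : ‖y - p i‖ = 1) :
    localOddPart g P x p (2 • p i - y) = -localOddPart g P x p y := by
  have hy' : ‖2 • p i - y - p i‖ = 1 := by
    rw [← hy, ← norm_neg]
    congr 1
    module
  rw [localOddPart_eq_sub hg hsep hi (by linarith), localOddPart_eq_sub hg hsep hi (by linarith),
    cutoffReflection_of_norm_sub_le_one hy.le, cutoffReflection_of_norm_sub_le_one hy'.le,
    sub_sub_cancel, neg_sub]

lemma localOddPart_ne_zero (hg : ∀ i ∈ P, g (x i) = 0)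
    (hsep : (P : Set ι).Pairwise fun i j => 4 ≤ ‖p i - p j‖)
    (hxp : ∀ i, ‖x i - p i‖ ≤ 1 / 2) (hinj : ∀ i ∈ P, Set.InjOn g (Metric.closedBall (x i) 3))
    (hy : ∀ i ∈ P, 1 ≤ ‖y - p i‖) (hgy : (∀ i ∈ P, y ≠ x i) → g y ≠ 0) :
    localOddPart g P x p y ≠ 0 := by
  by_cases hfar : ∀ i ∈ P, 2 ≤ ‖y - p i‖
  · rw [localOddPart_eq_self hg hfar]
    refine hgy fun i hi hyx => ?_
    linarith [hfar i hi, hyx ▸ hxp i]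
  · push Not at hfar
    obtain ⟨i, hi, hnear⟩ := hfar
    rw [localOddPart_eq_sub hg hsep hi hnear.le, sub_ne_zero]
    have hmem : y ∈ Metric.closedBall (x i) 3 := by
      rw [mem_closedBall_iff_norm]
      linarith [hxp i, norm_sub_le_norm_sub_add_norm_sub y (p i) (x i),
        norm_sub_rev (x i) (p i)]
    have hmem' : cutoffReflection (x i) (p i) y ∈ Metric.closedBall (x i) 3 :=
      mem_closedBall_iff_norm.2 (norm_cutoffReflection_sub_le (hxp i) hnear.le)
    exact fun h => cutoffReflection_ne_self (hxp i) (hy i hi) (hinj i hi hmem hmem' h).symm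

end LocalOddPart

lemma odd_card_of_locallyInjective_of_separated {ι : Type*} {P : Finset ι}
    {g : (Fin n → ℝ) → Fin n → ℝ} (hg : Continuous g) {m : ℕ} {x : ι → Fin n → ℝ}
    (hzero : ∀ i ∈ P, g (x i) = 0) (hne : ∀ y, ‖y‖ ≤ m → (∀ i ∈ P, y ≠ x i) → g y ≠ 0)
    (hodd : ∀ y, ‖y‖ = m → g (-y) = -g y) (hin : ∀ i ∈ P, ‖x i‖ + 3 ≤ m)
    (hsep : (P : Set ι).Pairwise fun i j => 5 ≤ ‖x i - x j‖)
    (hinj : ∀ i ∈ P, Set.InjOn g (Metric.closedBall (x i) 3)) : Odd P.card := by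
  let q i : Fin n → ℝ := fun j => round (x i j)
  have hxq i : ‖x i - q i‖ ≤ 1 / 2 :=
    (pi_norm_le_iff_of_nonneg (by norm_num)).2 fun j => abs_sub_round (x i j)
  have hin' i (hi : i ∈ P) : ‖q i‖ + 2 ≤ m := by
    linarith [hin i hi, hxq i, norm_sub_norm_le (q i) (x i), norm_sub_rev (x i) (q i)]
  have hsep' : (P : Set ι).Pairwise fun i j => 4 ≤ ‖q i - q j‖ := fun i hi j hj hij => by
    linarith [hsep hi hj hij, hxq i, hxq j, norm_sub_le_norm_sub_add_norm_sub (x i) (q i) (x j),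
      norm_sub_le_norm_sub_add_norm_sub (q i) (q j) (x j), norm_sub_rev (x j) (q j)]
  have houter {y : Fin n → ℝ} (hy : ‖y‖ = m) : localOddPart g P x q y = g y :=
    localOddPart_eq_self hzero fun i hi => by linarith [hin' i hi, norm_sub_norm_le y (q i)]
  refine odd_card_of_ne_zero_on_perforatedCube (p := fun i j => round (x i j)) (q := q)
    (G := localOddPart g P x q) (fun _ => rfl) (fun i hi => by linarith [hin' i hi])
    (hsep'.imp fun i j h => by linarith) ?_ ?_ ?_
    (fun i hi y hy => localOddPart_two_smul_sub hzero hsep' hi hy)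
  · exact (hg.sub (continuous_finsetSum _ fun i _ =>
      hg.comp (continuous_cutoffReflection _ _))).continuousOn
  · exact fun y hy => localOddPart_ne_zero hzero hsep' hxq hinj hy.2 (hne y hy.1)
  · intro y hy
    rw [houter hy, houter (by rwa [norm_neg]), hodd y hy]

lemma eventually_div_le {r ε : ℝ} (hε : 0 < ε) : ∀ᶠ m : ℕ in Filter.atTop, r / m ≤ ε :=
  (tendsto_const_div_atTop_nhds_zero_nat r).eventually_le_const hε

lemma eventually_separated_and_injOn_closedBall {F : Type*} {g : (Fin n → ℝ) → F}
    {Z : Finset (Fin n → ℝ)} (hlt : ∀ y ∈ Z, ‖y‖ < 1) (hinj : ∀ x ∈ Z, ∃ U ∈ 𝓝 x, Set.InjOn g U) :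
    ∀ᶠ m : ℕ in Filter.atTop, ∀ x ∈ Z, 3 / (m : ℝ) ≤ 1 - ‖x‖ ∧
      (∀ y ∈ Z, x ≠ y → 5 / (m : ℝ) ≤ ‖x - y‖) ∧
      Set.InjOn g (Metric.closedBall x (3 / m)) := by
  refine (Finset.eventually_all Z).2 fun x hx =>
    (eventually_div_le (sub_pos.2 (hlt x hx))).and <| .and ?_ ?_
  · refine (Finset.eventually_all Z).2 fun y _ => ?_
    rcases eq_or_ne x y with h | h
    · exact .of_forall fun _ hne => absurd h hne
    · exact (eventually_div_le (norm_pos_iff.2 (sub_ne_zero.2 h))).mono fun _ h _ => h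
  · obtain ⟨U, hU, hinjU⟩ := hinj x hx
    obtain ⟨ε, hε, hεU⟩ := Metric.nhds_basis_closedBall.mem_iff.1 hU
    exact (eventually_div_le hε).mono fun m hm =>
      hinjU.mono ((Metric.closedBall_subset_closedBall hm).trans hεU)

theorem odd_card_zeros_of_odd_on_sphere {g : (Fin n → ℝ) → Fin n → ℝ} (hg : Continuous g)
    (hodd : ∀ y, ‖y‖ = 1 → g (-y) = -g y) {Z : Finset (Fin n → ℝ)}
    (hZ : ∀ y, ‖y‖ ≤ 1 → (g y = 0 ↔ y ∈ Z)) (hlt : ∀ y ∈ Z, ‖y‖ < 1)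
    (hinj : ∀ x ∈ Z, ∃ U ∈ 𝓝 x, Set.InjOn g U) : Odd Z.card := by
  obtain ⟨m, hm, hZm⟩ := ((Filter.eventually_gt_atTop 0).and
    (eventually_separated_and_injOn_closedBall hlt hinj)).exists
  have hm' : (0 : ℝ) < m := Nat.cast_pos.2 hm
  have hnorm (y : Fin n → ℝ) : ‖(m : ℝ)⁻¹ • y‖ = ‖y‖ / m := by
    rw [norm_smul, norm_inv, Real.norm_of_nonneg hm'.le, inv_mul_eq_div]
  have hdist (x y : Fin n → ℝ) : ‖(m : ℝ)⁻¹ • y - x‖ = ‖y - (m : ℝ) • x‖ / m := by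
    rw [← hnorm, smul_sub, inv_smul_smul₀ hm'.ne']
  refine odd_card_of_locallyInjective_of_separated (m := m) (g := fun y => g ((m : ℝ)⁻¹ • y))
    (x := fun x => (m : ℝ) • x) (hg.comp (continuous_const_smul _)) (fun x hx => ?_)
    (fun y hy hyZ => ?_) (fun y hy => ?_) (fun x hx => ?_) (fun x hx y hy hxy => ?_)
    (fun x hx y hy y' hy' h => ?_)
  · rw [inv_smul_smul₀ hm'.ne', hZ x (hlt x hx).le]
    exact hx
  · rw [Ne, hZ _ (by rw [hnorm, div_le_one hm']; exact hy)]
    exact fun hmem => hyZ _ hmem (smul_inv_smul₀ hm'.ne' y).symm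
  · rw [smul_neg]
    exact hodd _ (by rw [hnorm, hy, div_self hm'.ne'])
  · have := (div_le_iff₀ hm').1 (hZm x hx).1
    rw [norm_smul, Real.norm_of_nonneg hm'.le]
    linarith
  · simp only [← smul_sub, norm_smul, Real.norm_of_nonneg hm'.le]
    exact (div_le_iff₀' hm').1 ((hZm x hx).2.1 y hy hxy)
  · have hball {y : Fin n → ℝ} (hy : y ∈ Metric.closedBall ((m : ℝ) • x) 3) :
        (m : ℝ)⁻¹ • y ∈ Metric.closedBall x (3 / m) := by
      rw [mem_closedBall_iff_norm, hdist]
      gcongr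
      exact mem_closedBall_iff_norm.1 hy
    exact smul_right_injective _ (inv_ne_zero hm'.ne')
      ((hZm x hx).2.2 (hball hy) (hball hy') h)

end Surgery

section BorsukUlam

open Module

theorem not_injective_of_finrank_lt {E F : Type*} [NormedAddCommGroup E] [NormedSpace ℝ E]
    [FiniteDimensional ℝ E] [NormedAddCommGroup F] [NormedSpace ℝ F] [FiniteDimensional ℝ F]
    (h : finrank ℝ F < finrank ℝ E) {j : E → F} (hj : Continuous j) : ¬ Function.Injective j := by
  intro hinj
  let n := finrank ℝ E
  let e : E ≃L[ℝ] (Fin n → ℝ) := ContinuousLinearEquiv.ofFinrankEq (by simp [n])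
  obtain ⟨L, hL⟩ : ∃ L : F × ℝ →ₗ[ℝ] (Fin n → ℝ), Function.Injective L :=
    finrank_le_iff_exists_linearMap.1 (by simpa [n] using h)
  let g (x : Fin n → ℝ) : Fin n → ℝ := L (j (e.symm x) - j (e.symm (-x)), 1 - ‖x‖)
  have hg : Continuous g := L.continuous_of_finiteDimensional.comp (by fun_prop)
  have hodd (y : Fin n → ℝ) (hy : ‖y‖ = 1) : g (-y) = -g y := by
    simp [g, hy, ← map_neg]
  have hne (y : Fin n → ℝ) : g y ≠ 0 := by
    intro hy
    obtain ⟨hj₀, hnorm⟩ := Prod.mk_eq_zero.1 ((map_eq_zero_iff L hL).1 hy)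
    have hy₀ : y = 0 := self_eq_neg.1 (e.symm.injective (hinj (sub_eq_zero.1 hj₀)))
    simp [hy₀] at hnorm
  simpa using odd_card_zeros_of_odd_on_sphere (Z := ∅) hg hodd (by simp [hne]) (by simp) (by simp)

end BorsukUlam

section Hemisphere

open Module
open scoped Topology

lemma exists_continuousLinearEquiv_fst_ne_zero {E : Type*} [NormedAddCommGroup E] [NormedSpace ℝ E]
    {d : ℕ} (hd : finrank ℝ E = d + 1) {S : Set E} (hS : S.Finite) (hS₀ : 0 ∉ S) :
    ∃ M : E ≃L[ℝ] ℝ × (Fin d → ℝ), ∀ p ∈ S, (M p).1 ≠ 0 := by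
  have : FiniteDimensional ℝ E := .of_finrank_pos (by lia)
  have : Nontrivial E := nontrivial_of_finrank_pos (R := ℝ) (by lia)
  obtain ⟨v, hv⟩ := exists_ne (0 : E)
  have : Finite (insert v S : Set E) := hS.insert v
  obtain ⟨ℓ, hℓ⟩ := exists_dual_forall_apply_ne_zero (K := ℝ) (fun p : (insert v S : Set E) => p.1)
    fun p hp => by
      rcases p.2 with h | h
      · exact hv (h ▸ hp)
      · exact hS₀ (hp ▸ h)
  let ℓ' : E →L[ℝ] ℝ := LinearMap.toContinuousLinearMap ℓ
  have hℓv : ℓ' v ≠ 0 := hℓ ⟨v, Set.mem_insert v S⟩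
  have hker : finrank ℝ ℓ'.ker = finrank ℝ (Fin d → ℝ) := by
    have := Dual.finrank_ker_add_one_of_ne_zero (f := ℓ) (fun h => hℓv (by simp [ℓ', h]))
    simp only [finrank_fin_fun]
    change finrank ℝ (LinearMap.ker ℓ) = d
    lia
  let M := ContinuousLinearEquiv.equivOfRightInverse ℓ'
    (ContinuousLinearMap.toSpanSingleton ℝ ((ℓ' v)⁻¹ • v)) fun t => by simp [hℓv]
  exact ⟨M.trans ((ContinuousLinearEquiv.refl ℝ ℝ).prodCongr (.ofFinrankEq hker)),
    fun p hp => hℓ ⟨p, Set.mem_insert_of_mem v hp⟩⟩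

variable {E H : Type*} [NormedAddCommGroup E] [NormedSpace ℝ E] [NormedAddCommGroup H]
  [NormedSpace ℝ H] (M : E ≃L[ℝ] ℝ × H)

lemma symm_one_sub_norm_ne_zero (x : H) : M.symm (1 - ‖x‖, x) ≠ 0 := by
  rw [Ne, M.symm.map_eq_zero_iff]
  intro h
  obtain ⟨h₁, rfl⟩ := Prod.mk_eq_zero.1 h
  simp at h₁

/-- The central projection to the unit sphere of the cone `t = 1 - ‖x‖` over `H`, in coordinates
`(t, x)` on `E`. It maps the closed unit ball onto the closed hemisphere `0 ≤ t`. -/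
noncomputable def hemisphereParam (x : H) : Metric.sphere (0 : E) 1 :=
  ⟨NormedSpace.normalize (M.symm (1 - ‖x‖, x)), mem_sphere_zero_iff_norm.2
    (NormedSpace.norm_normalize (symm_one_sub_norm_ne_zero M x))⟩

/-- The inverse of `hemisphereParam`, as a homogeneous function of degree `0`. -/
noncomputable def hemisphereCoord (p : Metric.sphere (0 : E) 1) : H :=
  ((M p).1 + ‖(M p).2‖)⁻¹ • (M p).2

lemma continuous_hemisphereParam : Continuous (hemisphereParam M) := by
  have hcone : Continuous fun x : H => M.symm (1 - ‖x‖, x) := by fun_prop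
  exact ((hcone.norm.inv₀ fun x => norm_ne_zero_iff.2 (symm_one_sub_norm_ne_zero M x)).smul
    hcone).subtype_mk _

lemma hemisphereParam_neg {x : H} (hx : ‖x‖ = 1) :
    hemisphereParam M (-x) = -hemisphereParam M x := by
  ext
  simp [hemisphereParam, hx, ← NormedSpace.normalize_neg, ← map_neg]

lemma exists_pos_map_hemisphereParam (x : H) :
    ∃ c : ℝ, 0 < c ∧ M (hemisphereParam M x) = (c * (1 - ‖x‖), c • x) :=
  ⟨‖M.symm (1 - ‖x‖, x)‖⁻¹, inv_pos.2 (norm_pos_iff.2 (symm_one_sub_norm_ne_zero M x)), by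
    simp [hemisphereParam, NormedSpace.normalize]⟩

lemma hemisphereCoord_hemisphereParam (x : H) :
    hemisphereCoord M (hemisphereParam M x) = x := by
  obtain ⟨c, hc, h⟩ := exists_pos_map_hemisphereParam M x
  simp [hemisphereCoord, h, norm_smul, abs_of_pos hc, mul_sub, smul_smul, hc.ne']

lemma hemisphereParam_injective : Function.Injective (hemisphereParam M) :=
  Function.LeftInverse.injective (hemisphereCoord_hemisphereParam M)

lemma norm_le_one_iff_fst_hemisphereParam_nonneg {x : H} :
    ‖x‖ ≤ 1 ↔ 0 ≤ (M (hemisphereParam M x)).1 := by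
  obtain ⟨c, hc, h⟩ := exists_pos_map_hemisphereParam M x
  simp [h, hc]

lemma norm_lt_one_iff_fst_hemisphereParam_pos {x : H} :
    ‖x‖ < 1 ↔ 0 < (M (hemisphereParam M x)).1 := by
  obtain ⟨c, hc, h⟩ := exists_pos_map_hemisphereParam M x
  simp [h, hc]

lemma hemisphereParam_hemisphereCoord {p : Metric.sphere (0 : E) 1} (hp : 0 < (M p).1) :
    hemisphereParam M (hemisphereCoord M p) = p := by
  set k := (M p).1 + ‖(M p).2‖ with hk
  have hk₀ : 0 < k := by positivity
  have hcone : ((1 : ℝ) - ‖hemisphereCoord M p‖, hemisphereCoord M p) = k⁻¹ • M p := by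
    refine Prod.ext ?_ rfl
    rw [hemisphereCoord, ← hk, norm_smul, Real.norm_of_nonneg (inv_pos.2 hk₀).le, Prod.smul_fst,
      smul_eq_mul]
    field_simp
    linarith
  ext
  simp only [hemisphereParam, hcone]
  rw [map_smul, M.symm_apply_apply,
    NormedSpace.normalize_smul_of_pos (inv_pos.2 hk₀),
    NormedSpace.normalize_eq_self_of_norm_eq_one (mem_sphere_zero_iff_norm.1 p.2)]

end Hemisphere

section OddMapsOnSphere

open Module
open scoped Topology

variable {E : Type*} [NormedAddCommGroup E] [NormedSpace ℝ E]

lemma card_eq_two_mul_card_filter_pos {X : Type*} [InvolutiveNeg X] {S : Finset X}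
    (hneg : ∀ p ∈ S, -p ∈ S) {ℓ : X → ℝ} (hodd : ∀ p, ℓ (-p) = -ℓ p) (hℓ : ∀ p ∈ S, ℓ p ≠ 0) :
    S.card = 2 * Finset.card {p ∈ S | 0 < ℓ p} := by
  have hcard : Finset.card {p ∈ S | 0 < ℓ p} = Finset.card {p ∈ S | ¬ 0 < ℓ p} := by
    refine Finset.card_nbij' Neg.neg Neg.neg ?_ ?_ (fun p _ => neg_neg p) fun p _ => neg_neg p
    · intro p hp
      obtain ⟨hpS, hpos⟩ := Finset.mem_filter.1 hp
      exact Finset.mem_filter.2 ⟨hneg p hpS, by simpa [hodd] using hpos.le⟩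
    · intro p hp
      obtain ⟨hpS, hpos⟩ := Finset.mem_filter.1 hp
      exact Finset.mem_filter.2
        ⟨hneg p hpS, by simpa [hodd] using (hℓ p hpS).lt_of_le (not_lt.1 hpos)⟩
  rw [← Finset.card_filter_add_card_filter_not (s := S) fun p => 0 < ℓ p, ← hcard, two_mul]

lemma odd_card_zeros_filter_pos {d : ℕ} {G : Metric.sphere (0 : E) 1 → Fin d → ℝ}
    (hG : Continuous G) (hodd : ∀ p, G (-p) = -G p)
    (hinj : ∀ p, G p = 0 → ∃ U ∈ 𝓝 p, Set.InjOn G U) (M : E ≃L[ℝ] ℝ × (Fin d → ℝ))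
    {S : Finset (Metric.sphere (0 : E) 1)} (hS : ∀ p, p ∈ S ↔ G p = 0)
    (hM : ∀ p ∈ S, (M p).1 ≠ 0) :
    Odd (S.filter fun p : Metric.sphere (0 : E) 1 => 0 < (M p).1).card := by
  classical
  set S' := S.filter fun p : Metric.sphere (0 : E) 1 => 0 < (M p).1
  have hparam {p} (hp : p ∈ S') : hemisphereParam M (hemisphereCoord M p) = p :=
    hemisphereParam_hemisphereCoord M (Finset.mem_filter.1 hp).2
  have hZ {y} : y ∈ S'.image (hemisphereCoord M) ↔ hemisphereParam M y ∈ S' := by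
    refine Finset.mem_image.trans ⟨?_, fun hy => ⟨_, hy, hemisphereCoord_hemisphereParam M y⟩⟩
    rintro ⟨p, hp, rfl⟩
    exact (hparam hp).symm ▸ hp
  have hcoord : Set.InjOn (hemisphereCoord M) S' := fun p hp p' hp' h => by
    rw [← hparam hp, ← hparam hp', h]
  rw [← Finset.card_image_of_injOn hcoord]
  refine odd_card_zeros_of_odd_on_sphere (hG.comp (continuous_hemisphereParam M)) ?_ ?_ ?_ ?_
  · intro y hy
    simp [hemisphereParam_neg M hy, hodd]
  · intro y hy
    have hnonneg := (norm_le_one_iff_fst_hemisphereParam_nonneg M).1 hy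
    rw [hZ, Finset.mem_filter, hS]
    exact ⟨fun h => ⟨h, hnonneg.lt_of_ne (hM _ ((hS _).2 h)).symm⟩, fun h => h.1⟩
  · exact fun y hy => (norm_lt_one_iff_fst_hemisphereParam_pos M).2
      (Finset.mem_filter.1 (hZ.1 hy)).2
  · intro y hy
    obtain ⟨U, hU, hinjU⟩ := hinj _ ((hS _).1 (Finset.mem_filter.1 (hZ.1 hy)).1)
    exact ⟨_, (continuous_hemisphereParam M).continuousAt hU,
      hinjU.comp (hemisphereParam_injective M).injOn (Set.mapsTo_preimage _ _)⟩

theorem exists_odd_ncard_zeros_eq_two_mul {d : ℕ} (hd : finrank ℝ E = d + 1)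
    {G : Metric.sphere (0 : E) 1 → Fin d → ℝ} (hG : Continuous G) (hodd : ∀ p, G (-p) = -G p)
    (hfin : {p | G p = 0}.Finite) (hinj : ∀ p, G p = 0 → ∃ U ∈ 𝓝 p, Set.InjOn G U) :
    ∃ k, Odd k ∧ {p | G p = 0}.ncard = 2 * k := by
  obtain ⟨M, hM⟩ := exists_continuousLinearEquiv_fst_ne_zero hd (hfin.image Subtype.val) (by
    rintro ⟨p, -, hp⟩
    exact Metric.ne_of_mem_sphere p.2 one_ne_zero hp)
  have hS p : p ∈ hfin.toFinset ↔ G p = 0 := by simp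
  have hM' p (hp : p ∈ hfin.toFinset) : (M p).1 ≠ 0 := hM p ⟨p, (hS p).1 hp, rfl⟩
  refine ⟨_, odd_card_zeros_filter_pos hG hodd hinj M hS hM', ?_⟩
  rw [Set.ncard_eq_toFinset_card _ hfin]
  exact card_eq_two_mul_card_filter_pos (by simp [hodd]) (fun p => by simp) hM'

end OddMapsOnSphere

section AffineIndependence

variable {V E : Type*} [AddCommGroup E] [Module ℝ E]

lemma affineIndependent_of_mem_convexHull_of_forall_ssubset {f : V → E} {σ : Finset V} {x : E}
    (hx : x ∈ convexHull ℝ (f '' σ)) (hmin : ∀ τ ⊂ σ, x ∉ convexHull ℝ (f '' τ)) :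
    AffineIndependent ℝ fun v : σ => f v := by
  classical
  have hinj : Set.InjOn f σ := by
    intro v hv v' hv' hvv'
    by_contra hne
    refine hmin _ (Finset.erase_ssubset hv) (convexHull_mono ?_ hx)
    rintro _ ⟨u, hu, rfl⟩
    obtain rfl | huv := eq_or_ne u v
    · exact ⟨v', by simp_all [Ne.symm hne], hvv'.symm⟩
    · exact ⟨u, by simp_all, rfl⟩
  by_contra hdep
  let fσ : σ ↪ σ.image f :=
    ⟨fun v => ⟨f v, Finset.mem_image_of_mem f v.2⟩,
      fun v v' h => Subtype.ext (hinj v.2 v'.2 (congrArg Subtype.val h))⟩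
  have hdep' : ¬ AffineIndependent ℝ ((↑) : σ.image f → E) := fun h =>
    hdep (h.comp_embedding fσ)
  obtain ⟨⟨y, hy⟩, hxy⟩ := Caratheodory.mem_convexHull_erase hdep' (by simpa using hx)
  obtain ⟨v, hv, rfl⟩ := Finset.mem_image.1 hy
  refine hmin _ (Finset.erase_ssubset hv) (convexHull_mono ?_ hxy)
  have hσv := hinj.image_sdiff_subset (Set.singleton_subset_iff.2 hv)
  simpa using hσv.ge

end AffineIndependence

section GeometricRealization

variable {V : Type*} [Fintype V]

/-- The carrier of a point of the realization: the vertex set of the face containing the point in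
its relative interior. -/
noncomputable def carrier (w : V → ℝ) : Finset V :=
  {v | w v ≠ 0}

lemma mem_carrier {w : V → ℝ} {v : V} : v ∈ carrier w ↔ w v ≠ 0 := by
  simp [carrier]

lemma mem_realization_iff {K : Set (Finset V)} {w : V → ℝ} :
    w ∈ realization K ↔ w ∈ stdSimplex ℝ V ∧ ∃ σ ∈ K, carrier w ⊆ σ := by
  simp [realization, stdSimplex, and_assoc, Finset.subset_iff, mem_carrier]

lemma mem_realization_singleton {σ : Finset V} {w : V → ℝ} :
    w ∈ realization {σ} ↔ w ∈ stdSimplex ℝ V ∧ carrier w ⊆ σ := by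
  simp [mem_realization_iff]

lemma realization_singleton_subset {K : Set (Finset V)} {σ : Finset V} (hσ : σ ∈ K) :
    realization {σ} ⊆ realization K := fun _ hw =>
  have ⟨hw, hwσ⟩ := mem_realization_singleton.1 hw
  mem_realization_iff.2 ⟨hw, σ, hσ, hwσ⟩

lemma mem_realization_singleton_carrier {K : Set (Finset V)} {w : V → ℝ}
    (hw : w ∈ realization K) : w ∈ realization {carrier w} :=
  mem_realization_singleton.2 ⟨(mem_realization_iff.1 hw).1, subset_rfl⟩

lemma carrier_mem {K : Set (Finset V)} (hdown : ∀ σ ∈ K, ∀ τ ⊆ σ, τ ∈ K) {w : V → ℝ}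
    (hw : w ∈ realization K) : carrier w ∈ K :=
  have ⟨_, σ, hσ, hwσ⟩ := mem_realization_iff.1 hw
  hdown σ hσ _ hwσ

lemma eventually_carrier_subset (w : V → ℝ) : ∀ᶠ w' in nhds w, carrier w ⊆ carrier w' := by
  simp only [Finset.subset_iff, mem_carrier, Filter.eventually_all]
  exact fun v hv => (continuous_apply v).continuousAt.eventually_ne hv

lemma isCompact_realization (K : Set (Finset V)) : IsCompact (realization K) := by
  have hK : realization K = stdSimplex ℝ V ∩ ⋃ σ ∈ K, ⋂ v ∈ (σ : Set V)ᶜ, {w | w v = 0} := by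
    ext w
    simp [mem_realization_iff, Finset.subset_iff, mem_carrier, not_imp_comm]
  rw [hK]
  exact (isCompact_stdSimplex ℝ V).inter_right <| K.toFinite.isClosed_biUnion fun σ _ =>
    isClosed_biInter fun v _ => isClosed_eq (continuous_apply v) continuous_const

lemma comp_mem_realization [DecidableEq V] {K : Set (Finset V)} {ι : V → V}
    (hinv : Function.Involutive ι) (hsimp : ∀ σ ∈ K, σ.image ι ∈ K) {w : V → ℝ}
    (hw : w ∈ realization K) : w ∘ ι ∈ realization K := by
  obtain ⟨hnonneg, hsum, σ, hσ, hwσ⟩ := hw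
  exact ⟨fun v => hnonneg (ι v), (Equiv.sum_comp hinv.toPerm w).trans hsum, σ.image ι,
    hsimp σ hσ, fun v hv => Finset.mem_image.2 ⟨ι v, hwσ _ hv, hinv v⟩⟩

section LinearCombination

variable {E : Type*} [AddCommGroup E] [Module ℝ E]

lemma linearCombination_comp_of_odd {ι : V → V} (hinv : Function.Involutive ι) {f : V → E}
    (hodd : ∀ v, f (ι v) = -f v) (w : V → ℝ) :
    Fintype.linearCombination ℝ f (w ∘ ι) = -Fintype.linearCombination ℝ f w := by
  simp only [Fintype.linearCombination_apply, ← Finset.sum_neg_distrib]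
  rw [← Equiv.sum_comp hinv.toPerm]
  simp [hinv _, hodd]

lemma convex_realization_singleton (σ : Finset V) : Convex ℝ (realization {σ}) := by
  intro w hw w' hw' a b ha hb hab
  rw [mem_realization_singleton] at hw hw' ⊢
  refine ⟨convex_stdSimplex ℝ V hw.1 hw'.1 ha hb hab, fun v => ?_⟩
  have hv := @hw.2 v
  have hv' := @hw'.2 v
  simp only [mem_carrier, Pi.add_apply, Pi.smul_apply, smul_eq_mul] at hv hv' ⊢
  contrapose! hv
  simp_all

lemma realization_singleton_eq_convexHull [DecidableEq V] (σ : Finset V) :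
    realization {σ} = convexHull ℝ ((fun v => Pi.single v (1 : ℝ)) '' (σ : Set V)) := by
  refine Set.Subset.antisymm (fun w hw => ?_)
    (convexHull_min ?_ (convex_realization_singleton σ))
  · obtain ⟨⟨hnonneg, hsum⟩, hwσ⟩ := mem_realization_singleton.1 hw
    have hzero (v : V) (hv : v ∉ σ) : w v = 0 := by_contra fun h => hv (hwσ (mem_carrier.2 h))
    have hw_eq : w = ∑ v ∈ σ, w v • Pi.single v 1 := by
      rw [Finset.sum_subset (Finset.subset_univ σ) fun v _ hv => by simp [hzero v hv]]
      exact pi_eq_sum_univ' w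
    rw [hw_eq]
    refine (convex_convexHull ℝ _).sum_mem (fun v _ => hnonneg v) ?_ fun v hv =>
      subset_convexHull ℝ _ (Set.mem_image_of_mem _ hv)
    rw [← hsum, Finset.sum_subset (Finset.subset_univ σ) fun v _ hv => hzero v hv]
  · rintro _ ⟨v, hv, rfl⟩
    refine mem_realization_singleton.2 ⟨single_mem_stdSimplex ℝ v, fun u hu => ?_⟩
    obtain rfl : u = v := by_contra fun h => mem_carrier.1 hu (Pi.single_eq_of_ne h 1)
    exact hv

lemma linearCombination_image_realization_singleton (f : V → E) (σ : Finset V) :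
    Fintype.linearCombination ℝ f '' realization {σ} = convexHull ℝ (f '' σ) := by
  classical
  rw [realization_singleton_eq_convexHull, LinearMap.image_convexHull, Set.image_image]
  simp [Fintype.linearCombination_apply_single]

lemma linearCombination_mem_convexHull_carrier (f : V → E) {K : Set (Finset V)} {w : V → ℝ}
    (hw : w ∈ realization K) :
    Fintype.linearCombination ℝ f w ∈ convexHull ℝ (f '' carrier w) := by
  rw [← linearCombination_image_realization_singleton]
  exact Set.mem_image_of_mem _ (mem_realization_singleton_carrier hw)

lemma injOn_linearCombination_realization_singleton {f : V → E} {σ : Finset V}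
    (hf : AffineIndependent ℝ fun v : σ => f v) :
    Set.InjOn (Fintype.linearCombination ℝ f) (realization {σ}) := by
  intro w hw w' hw' heq
  obtain ⟨⟨-, hsum⟩, hwσ⟩ := mem_realization_singleton.1 hw
  obtain ⟨⟨-, hsum'⟩, hwσ'⟩ := mem_realization_singleton.1 hw'
  have hzero (v : V) (hv : v ∉ σ) : w v - w' v = 0 := by
    have h := mt (@hwσ v) hv
    have h' := mt (@hwσ' v) hv
    simp_all [mem_carrier]
  have hdiff : ∀ v : σ, w v - w' v = 0 := by
    refine fun v => affineIndependent_iff.1 hf Finset.univ (fun v => w v - w' v) ?_ ?_ v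
      (Finset.mem_univ v)
    · rw [Finset.sum_coe_sort σ fun v => w v - w' v,
        Finset.sum_subset (Finset.subset_univ σ) fun v _ hv => hzero v hv,
        Finset.sum_sub_distrib, hsum, hsum', sub_self]
    · rw [Finset.sum_coe_sort σ fun v => (w v - w' v) • f v,
        Finset.sum_subset (Finset.subset_univ σ) fun v _ hv => by rw [hzero v hv, zero_smul]]
      simpa [Fintype.linearCombination_apply, sub_smul, sub_eq_zero] using heq
  ext v
  by_cases hv : v ∈ σ
  · exact sub_eq_zero.1 (hdiff ⟨v, hv⟩)
  · exact sub_eq_zero.1 (hzero v hv)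

end LinearCombination

end GeometricRealization

section GibbsWeights

variable {V : Type*}

/-- The point of the open face `σ` whose barycentric coordinates are proportional to `exp (x v)`;
this parametrizes the open face, modulo the constant vectors `x`. -/
noncomputable def gibbsWeights (σ : Finset V) (x : σ → ℝ) : V → ℝ :=
  Function.extend (↑) (fun v => Real.exp (x v) / ∑ u, Real.exp (x u)) 0

lemma gibbsWeights_apply (σ : Finset V) (x : σ → ℝ) (v : σ) :
    gibbsWeights σ x v = Real.exp (x v) / ∑ u, Real.exp (x u) :=
  Subtype.val_injective.extend_apply ..

lemma gibbsWeights_apply_of_notMem {σ : Finset V} (x : σ → ℝ) {v : V} (hv : v ∉ σ) :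
    gibbsWeights σ x v = 0 :=
  Function.extend_apply' _ _ _ fun ⟨u, hu⟩ => hv (hu ▸ u.2)

lemma continuous_gibbsWeights (σ : Finset V) : Continuous (gibbsWeights σ) := by
  refine continuous_pi fun v => ?_
  by_cases hv : v ∈ σ
  · have : Nonempty σ := ⟨⟨v, hv⟩⟩
    simp only [gibbsWeights_apply σ _ ⟨v, hv⟩]
    exact Continuous.div (by fun_prop) (by fun_prop) fun x =>
      (Finset.sum_pos (fun u _ => Real.exp_pos (x u)) Finset.univ_nonempty).ne'
  · simpa only [gibbsWeights_apply_of_notMem _ hv] using continuous_const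

variable [Fintype V]

lemma gibbsWeights_mem_realization {K : Set (Finset V)} {σ : Finset V} (hσ : σ ∈ K)
    (hne : σ.Nonempty) (x : σ → ℝ) : gibbsWeights σ x ∈ realization K := by
  have : Nonempty σ := hne.to_subtype
  have htotal : 0 < ∑ u, Real.exp (x u) :=
    Finset.sum_pos (fun u _ => Real.exp_pos (x u)) Finset.univ_nonempty
  refine ⟨fun v => ?_, ?_, σ, hσ, fun v => not_imp_comm.1 (gibbsWeights_apply_of_notMem x)⟩
  · by_cases hv : v ∈ σ
    · rw [gibbsWeights_apply σ x ⟨v, hv⟩]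
      positivity
    · rw [gibbsWeights_apply_of_notMem x hv]
  · rw [← Finset.sum_subset (Finset.subset_univ σ) fun v _ => gibbsWeights_apply_of_notMem x,
      ← Finset.sum_coe_sort]
    simp only [gibbsWeights_apply]
    rw [← Finset.sum_div, div_self htotal.ne']

/- The cone over an open face with `m` vertices is an `m`-dimensional cell, which the radial
extension of `φ` embeds in `E`. -/
lemma card_le_finrank_of_injOn_realization {E : Type*} [NormedAddCommGroup E] [NormedSpace ℝ E]
    [FiniteDimensional ℝ E] {K : Set (Finset V)} {φ : (V → ℝ) → E}
    (hφ : ContinuousOn φ (realization K)) (hinj : Set.InjOn φ (realization K))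
    (hsphere : Set.MapsTo φ (realization K) (Metric.sphere 0 1)) {σ : Finset V} (hσ : σ ∈ K) :
    σ.card ≤ Module.finrank ℝ E := by
  by_contra! hlt
  have hne : σ.Nonempty := Finset.card_pos.1 (pos_of_gt hlt)
  have : Nonempty σ := hne.to_subtype
  have hmem := gibbsWeights_mem_realization hσ hne
  let total (x : σ → ℝ) : ℝ := ∑ v, Real.exp (x v)
  let cone (x : σ → ℝ) : E := total x • φ (gibbsWeights σ x)
  have htotal x : 0 < total x := Finset.sum_pos (fun v _ => Real.exp_pos _) Finset.univ_nonempty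
  have hnorm x : ‖cone x‖ = total x := by
    rw [norm_smul, mem_sphere_zero_iff_norm.1 (hsphere (hmem x)), mul_one,
      Real.norm_of_nonneg (htotal x).le]
  have hcont : Continuous cone :=
    Continuous.smul (by fun_prop) (hφ.comp_continuous (continuous_gibbsWeights σ) hmem)
  refine not_injective_of_finrank_lt (by simpa using hlt) hcont fun x y hxy => ?_
  have hxy_total : total x = total y := by rw [← hnorm, hxy, hnorm]
  have hxy_weights : gibbsWeights σ x = gibbsWeights σ y := by
    refine hinj (hmem x) (hmem y) (smul_right_injective E (htotal x).ne' ?_)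
    simpa only [cone, hxy_total] using hxy
  ext v
  have hv := congrFun hxy_weights v
  rw [gibbsWeights_apply, gibbsWeights_apply] at hv
  change _ / total x = _ / total y at hv
  rw [hxy_total, div_left_inj' (htotal y).ne'] at hv
  exact Real.exp_injective hv

end GibbsWeights

section GenericLabeling

variable {V E : Type*} [AddCommGroup E] [Module ℝ E]

/-- A labeling `f` of the vertices of an (at most) `d`-dimensional complex `K` is generic if no
face of dimension less than `d` captures the origin. -/
structure IsGenericLabeling (K : Set (Finset V)) (f : V → E) (d : ℕ) : Prop where
  mem_of_subset : ∀ σ ∈ K, ∀ τ ⊆ σ, τ ∈ K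
  card_le : ∀ σ ∈ K, σ.card ≤ d + 1
  zero_notMem_convexHull : ∀ σ ∈ K, σ.card ≤ d → 0 ∉ convexHull ℝ (f '' ↑σ)

/-- The facets of `K` whose labels capture the origin. -/
def capturingFacets (K : Set (Finset V)) (f : V → E) : Set (Finset V) :=
  {σ | σ ∈ K ∧ (∀ τ ∈ K, σ ⊆ τ → σ = τ) ∧ 0 ∈ convexHull ℝ (f '' ↑σ)}

namespace IsGenericLabeling

variable {K : Set (Finset V)} {f : V → E} {d : ℕ} {σ τ : Finset V}

lemma eq_of_subset (hf : IsGenericLabeling K f d) (hσ : σ ∈ K)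
    (h0 : 0 ∈ convexHull ℝ (f '' ↑σ)) (hτ : τ ∈ K) (hστ : σ ⊆ τ) : σ = τ := by
  refine Finset.eq_of_subset_of_card_le hστ ((hf.card_le τ hτ).trans ?_)
  by_contra! hlt
  exact hf.zero_notMem_convexHull σ hσ (Nat.lt_succ_iff.1 hlt) h0

variable [Fintype V]

lemma injOn_linearCombination (hf : IsGenericLabeling K f d) (hσ : σ ∈ K)
    (h0 : 0 ∈ convexHull ℝ (f '' ↑σ)) :
    Set.InjOn (Fintype.linearCombination ℝ f) (realization {σ}) :=
  injOn_linearCombination_realization_singleton <|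
    affineIndependent_of_mem_convexHull_of_forall_ssubset h0 fun τ hτσ hτ =>
      hτσ.ne (hf.eq_of_subset (hf.mem_of_subset σ hσ τ hτσ.subset) hτ hσ hτσ.subset)

lemma bijOn_carrier (hf : IsGenericLabeling K f d) :
    Set.BijOn carrier {w | w ∈ realization K ∧ Fintype.linearCombination ℝ f w = 0}
      (capturingFacets K f) := by
  have hmem {w : V → ℝ} (hw : w ∈ realization K) := carrier_mem hf.mem_of_subset hw
  have hcaptures {w : V → ℝ} (hw : w ∈ realization K) (h0 : Fintype.linearCombination ℝ f w = 0) :=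
    h0 ▸ linearCombination_mem_convexHull_carrier f hw
  refine ⟨?_, ?_, ?_⟩
  · rintro w ⟨hw, h0⟩
    exact ⟨hmem hw, fun τ => hf.eq_of_subset (hmem hw) (hcaptures hw h0), hcaptures hw h0⟩
  · rintro w ⟨hw, h0⟩ w' ⟨hw', h0'⟩ heq
    exact hf.injOn_linearCombination (hmem hw) (hcaptures hw h0)
      (mem_realization_singleton_carrier hw) (heq ▸ mem_realization_singleton_carrier hw')
      (h0.trans h0'.symm)
  · rintro σ ⟨hσ, -, hσ0⟩
    rw [← linearCombination_image_realization_singleton] at hσ0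
    obtain ⟨w, hw, h0⟩ := hσ0
    have hwK := realization_singleton_subset hσ hw
    exact ⟨w, ⟨hwK, h0⟩, hf.eq_of_subset (hmem hwK) (hcaptures hwK h0) hσ
      (mem_realization_singleton.1 hw).2⟩

lemma exists_nhds_injOn (hf : IsGenericLabeling K f d) {w : V → ℝ} (hw : w ∈ realization K)
    (h0 : Fintype.linearCombination ℝ f w = 0) :
    ∃ U ∈ nhds w, Set.InjOn (Fintype.linearCombination ℝ f) (realization K ∩ U) := by
  have hwK := carrier_mem hf.mem_of_subset hw
  have hw0 := h0 ▸ linearCombination_mem_convexHull_carrier f hw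
  refine ⟨_, eventually_carrier_subset w, (hf.injOn_linearCombination hwK hw0).mono ?_⟩
  rintro w' ⟨hw', hww'⟩
  rw [hf.eq_of_subset hwK hw0 (carrier_mem hf.mem_of_subset hw') hww']
  exact mem_realization_singleton_carrier hw'

end IsGenericLabeling

end GenericLabeling

theorem exists_homeomorph_of_bijOn {X Y : Type*} [TopologicalSpace X] [TopologicalSpace Y]
    [T2Space Y] {φ : X → Y} {s : Set X} {t : Set Y} (hs : IsCompact s) (hφ : ContinuousOn φ s)
    (hbij : Set.BijOn φ s t) : ∃ e : s ≃ₜ t, ∀ x, (e x : Y) = φ x := by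
  have := isCompact_iff_compactSpace.1 hs
  have hcont : Continuous (hbij.equiv φ) := hφ.mapsToRestrict hbij.mapsTo
  exact ⟨hcont.homeoOfEquivCompactToT2, fun _ => rfl⟩

section OddLabeling

open Module

theorem exists_odd_ncard_capturingFacets_eq_two_mul {V E F : Type*} [Fintype V]
    [NormedAddCommGroup E] [NormedSpace ℝ E] [NormedAddCommGroup F] [NormedSpace ℝ F]
    [FiniteDimensional ℝ F] {K : Set (Finset V)} {ι : V → V} (hι : Function.Involutive ι)
    {f : V → F} (hodd : ∀ v, f (ι v) = -f v) (hf : IsGenericLabeling K f (finrank ℝ F))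
    (hE : finrank ℝ E = finrank ℝ F + 1) (e : realization K ≃ₜ Metric.sphere (0 : E) 1)
    (he : ∀ p, (e.symm (-p) : V → ℝ) = e.symm p ∘ ι) :
    ∃ k, Odd k ∧ (capturingFacets K f).ncard = 2 * k := by
  let L : F ≃L[ℝ] (Fin (finrank ℝ F) → ℝ) := ContinuousLinearEquiv.ofFinrankEq (by simp)
  let G (p : Metric.sphere (0 : E) 1) := L (Fintype.linearCombination ℝ f (e.symm p))
  have hG : Continuous G := L.continuous.comp <|
    (LinearMap.continuous_of_finiteDimensional _).comp <|
      continuous_subtype_val.comp e.symm.continuous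
  have hGodd p : G (-p) = -G p := by
    simp only [G, he, linearCombination_comp_of_odd hι hodd, map_neg]
  have hzero : Set.BijOn (fun p => (e.symm p : V → ℝ)) {p | G p = 0}
      {w | w ∈ realization K ∧ Fintype.linearCombination ℝ f w = 0} := by
    refine ⟨fun p hp => ⟨(e.symm p).2, by simpa [G] using hp⟩,
      (Subtype.val_injective.comp e.symm.injective).injOn, fun w hw => ?_⟩
    exact ⟨e ⟨w, hw.1⟩, by simpa [G] using hw.2, by simp⟩
  have hfacets := hf.bijOn_carrier.comp hzero
  rw [← hfacets.image_eq, hfacets.injOn.ncard_image]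
  refine exists_odd_ncard_zeros_eq_two_mul hE hG hGodd
    (hfacets.finite_iff_finite.2 (Set.toFinite _)) fun p hp => ?_
  obtain ⟨U, hU, hinj⟩ := hf.exists_nhds_injOn (e.symm p).2 (by simpa [G] using hp)
  refine ⟨_, (continuous_subtype_val.comp e.symm.continuous).continuousAt hU, ?_⟩
  intro q hq q' hq' hqq'
  exact e.symm.injective <| Subtype.ext <|
    hinj ⟨(e.symm q).2, hq⟩ ⟨(e.symm q').2, hq'⟩ (L.injective hqq')

end OddLabeling

/-- Generic odd labeling theorem: let `Σ` be an antipodally symmetric triangulation of `S^d`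
(encoded by a free simplicial involution `ι` and an equivariant homeomorphism `φ` of the
realization onto the sphere), and let `f : V → ℝ^d` be an odd (`f(ιv) = -f(v)`) generic
labeling (no face of dimension `≤ d-1` captures `0`). Then the number of facets (maximal
faces) capturing `0` is `2k` with `k` odd. -/
theorem stmt19 {V : Type} [Fintype V] [DecidableEq V] (d : ℕ)
    (K : Set (Finset V)) (hdown : ∀ σ ∈ K, ∀ τ ⊆ σ, τ ∈ K)
    (ι : V → V) (hinv : ∀ v, ι (ι v) = v) (hfree : ∀ v, ι v ≠ v)
    (hsimp : ∀ σ ∈ K, σ.image ι ∈ K)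
    (φ : (V → ℝ) → EuclideanSpace ℝ (Fin (d + 1)))
    (hφc : ContinuousOn φ (realization K))
    (hφinj : Set.InjOn φ (realization K))
    (hφsurj : φ '' realization K = Metric.sphere (0 : EuclideanSpace ℝ (Fin (d + 1))) 1)
    (hφequiv : ∀ w ∈ realization K, φ (w ∘ ι) = - φ w)
    (f : V → EuclideanSpace ℝ (Fin d))
    (hodd : ∀ v, f (ι v) = - f v)
    (hgen : ∀ σ ∈ K, σ.card ≤ d → 0 ∉ convexHull ℝ (f '' ↑σ)) :
    ∃ k : ℕ, Odd k ∧
      {σ : Finset V | σ ∈ K ∧ (∀ τ ∈ K, σ ⊆ τ → σ = τ) ∧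
        0 ∈ convexHull ℝ (f '' ↑σ)}.ncard = 2 * k := by
  have hbij : Set.BijOn φ (realization K) (Metric.sphere 0 1) :=
    ⟨hφsurj ▸ Set.mapsTo_image .., hφinj, hφsurj.ge⟩
  obtain ⟨e, he⟩ := exists_homeomorph_of_bijOn (isCompact_realization K) hφc hbij
  have hf : IsGenericLabeling K f d :=
    { mem_of_subset := hdown
      card_le := fun σ hσ => by
        simpa using card_le_finrank_of_injOn_realization hφc hφinj hbij.mapsTo hσ
      zero_notMem_convexHull := hgen }
  have hsymm (p : Metric.sphere (0 : EuclideanSpace ℝ (Fin (d + 1))) 1) :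
      (e.symm (-p) : V → ℝ) = e.symm p ∘ ι := by
    refine hφinj (e.symm (-p)).2 (comp_mem_realization hinv hsimp (e.symm p).2) ?_
    rw [hφequiv _ (e.symm p).2, ← he, ← he, e.apply_symm_apply, e.apply_symm_apply]
    rfl
  exact exists_odd_ncard_capturingFacets_eq_two_mul hinv hodd (by simpa using hf) (by simp) e hsymm
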